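/- Let Ω ⊂ ℝ^d (d ≥ 2) be a domain and let L u = div(A Du) + b·Du + c u, where A satisfies λ|ξ|² ≤ a^{ij}(x)ξ^i ξ^j and |a^{ij}(x)ξ^i η^j| ≤ Λ|ξ||η| for all x ∈ Ω, ξ, η ∈ ℝ^d. Assume A ∈ C^α(Ω), b ∈ L^p(Ω) with p ≥ d/(1−α), c ∈ C^α(Ω), and f ∈ C^α(Ω) for some α ∈ (0,1). Let u ∈ C¹_loc(Ω) be a weak solution of L u = f in Ω with Du(x^o) = 0 at some x^o ∈ Ω. Then the second derivative D²u(x^o) exists and there is a constant C such that |Du(x) − D²u(x^o)(x − x^o)| ≤ C |x − x^o|^{1+α} for all x sufficiently close to x^o; that is, u enjoys C^{2,α} regularity at the critical point x^o. -/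

import Mathlib

open MeasureTheory Metric Filter
open scoped RealInnerProductSpace ENNReal Topology

noncomputable section

/-- Euclidean space `ℝ^d`. -/
abbrev Euc (d : ℕ) := EuclideanSpace ℝ (Fin d)

/-- The mean oscillation function `ω_f(r) = sup_{x ∈ Ω} ⨍_{Ω ∩ B_r(x)} |f - (f)_{Ω ∩ B_r(x)}|`. -/
noncomputable def meanOsc {d : ℕ} {F : Type*} [NormedAddCommGroup F] [NormedSpace ℝ F]
    (Ω : Set (Euc d)) (f : Euc d → F) (r : ℝ) : ℝ :=
  ⨆ x : Ω, ⨍ y in Ω ∩ ball (x : Euc d) r, ‖f y - ⨍ z in Ω ∩ ball (x : Euc d) r, f z‖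

/-- `f` has Dini mean oscillation on `Ω`: `∫₀¹ ω_f(r)/r dr < ∞`. -/
def HasDMO {d : ℕ} {F : Type*} [NormedAddCommGroup F] [NormedSpace ℝ F]
    (Ω : Set (Euc d)) (f : Euc d → F) : Prop :=
  IntegrableOn (fun r => meanOsc Ω f r / r) (Set.Ioc (0 : ℝ) 1)

/-- A modulus of continuity: nonnegative, nondecreasing on `(0,∞)`, tending to `0` at `0⁺`. -/
def IsModulus (ρ : ℝ → ℝ) : Prop :=
  (∀ t, 0 ≤ ρ t) ∧ MonotoneOn ρ (Set.Ioi 0) ∧ Tendsto ρ (𝓝[>] 0) (𝓝 0)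

/-- The sup norm `‖g‖_{L^∞(s)}` (for continuous `g`). -/
noncomputable def supNorm {d : ℕ} {F : Type*} [NormedAddCommGroup F]
    (g : Euc d → F) (s : Set (Euc d)) : ℝ :=
  ⨆ x : s, ‖g (x : Euc d)‖

/-- `sup_{x ∈ Ω} ∫_{Ω ∩ B_r(x)} g`. -/
noncomputable def supInt {d : ℕ} (Ω : Set (Euc d)) (g : Euc d → ℝ) (r : ℝ) : ℝ :=
  ⨆ x : Ω, ∫ y in Ω ∩ ball (x : Euc d) r, g y

/-- The Hessian `D²u(x)` of `u` at `x`, as a continuous bilinear form. -/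
noncomputable def hess {d : ℕ} (u : Euc d → ℝ) (x : Euc d) :
    Euc d →L[ℝ] Euc d →L[ℝ] ℝ :=
  fderiv ℝ (fun y => fderiv ℝ u y) x

/-- The Dini sum `ω̃(t) = Σ_{i≥1} κ^{iβ} (ω(κ^{-i}t) if κ^{-i}t ≤ 1, else ω(1))`. -/
noncomputable def diniSum (ω : ℝ → ℝ) (κ β : ℝ) (t : ℝ) : ℝ :=
  ∑' i : ℕ, (κ ^ β) ^ (i + 1) *
    (if t / κ ^ (i + 1) ≤ 1 then ω (t / κ ^ (i + 1)) else ω 1)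

/-- The norm `|𝒮| = sup_{|ξ|=1} |𝒮(ξ,ξ,ξ)|` of a (0,3)-tensor. -/
noncomputable def tnorm {d : ℕ} (S : Euc d →L[ℝ] Euc d →L[ℝ] Euc d →L[ℝ] ℝ) : ℝ :=
  ⨆ ξ : sphere (0 : Euc d) 1, |S ξ.1 ξ.1 ξ.1|

/-- A fully symmetric (0,3)-tensor. -/
def Sym3 {d : ℕ} (S : Euc d →L[ℝ] Euc d →L[ℝ] Euc d →L[ℝ] ℝ) : Prop :=
  ∀ x y z : Euc d, S x y z = S y x z ∧ S x y z = S x z y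

/-- `u` is a weak solution of `div(A Du) + b·Du + c u = f` in `Ω`. -/
def IsWeakSolDiv {d : ℕ} (Ω : Set (Euc d)) (A : Euc d → Euc d →L[ℝ] Euc d)
    (b : Euc d → Euc d) (c f u : Euc d → ℝ) : Prop :=
  ∀ φ : Euc d → ℝ, ContDiff ℝ (⊤ : ℕ∞) φ → HasCompactSupport φ → tsupport φ ⊆ Ω →
    ∫ x in Ω, (⟪b x, gradient u x⟫ + c x * u x - f x) * φ x
      = ∫ x in Ω, ⟪A x (gradient u x), gradient φ x⟫

/-- Hölder continuity with exponent `α` on `s`. -/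
def HolderOnE {d : ℕ} {F : Type*} [NormedAddCommGroup F]
    (g : Euc d → F) (α : ℝ) (s : Set (Euc d)) : Prop :=
  ∃ M : ℝ, ∀ x ∈ s, ∀ y ∈ s, ‖g x - g y‖ ≤ M * ‖x - y‖ ^ α

/-- `v` is the weak gradient of `u` on `s`. -/
def IsWeakGrad {d : ℕ} (s : Set (Euc d)) (u : Euc d → ℝ) (v : Euc d → Euc d) : Prop :=
  ∀ φ : Euc d → ℝ, ContDiff ℝ (⊤ : ℕ∞) φ → HasCompactSupport φ → tsupport φ ⊆ s →
    ∫ x in s, u x • gradient φ x = - ∫ x in s, φ x • v x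

/-- `u ∈ W^{1,p}₀(s)`, with weak gradient `v`: `u, v ∈ L^p`, `v` is the weak gradient of `u`,
and `u` is approximable by smooth compactly supported functions in the `W^{1,p}` norm. -/
def MemW1p0 {d : ℕ} (p : ℝ) (s : Set (Euc d)) (u : Euc d → ℝ) (v : Euc d → Euc d) : Prop :=
  IsWeakGrad s u v ∧
  MemLp u (ENNReal.ofReal p) (volume.restrict s) ∧
  MemLp v (ENNReal.ofReal p) (volume.restrict s) ∧
  ∀ ε : ℝ, 0 < ε → ∃ φ : Euc d → ℝ, ContDiff ℝ (⊤ : ℕ∞) φ ∧ HasCompactSupport φ ∧ tsupport φ ⊆ s ∧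
    eLpNorm (fun x => u x - φ x) (ENNReal.ofReal p) (volume.restrict s) < ENNReal.ofReal ε ∧
    eLpNorm (fun x => v x - gradient φ x) (ENNReal.ofReal p) (volume.restrict s) < ENNReal.ofReal ε

/-- The quantity `φ(r) = (1/r) inf_{l ∈ 𝔄} (⨍_{B_r} |Du - l|^{1/2})²`, the infimum being over
affine maps `l(x) = Sx + p` with `S` symmetric. -/
noncomputable def phiFun {d : ℕ} (u : Euc d → ℝ) (r : ℝ) : ℝ :=
  (1 / r) * ⨅ S : {S : Euc d →L[ℝ] Euc d // ∀ ξ η, ⟪S ξ, η⟫ = ⟪ξ, S η⟫}, ⨅ p : Euc d,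
    (⨍ x in ball (0 : Euc d) r, Real.sqrt ‖gradient u x - S.1 x - p‖) ^ 2

end


/-! ### Part 1: integration by parts and the scale derivative -/

section Abstract

set_option linter.unusedSectionVars false

variable {E : Type*} [NormedAddCommGroup E] [InnerProductSpace ℝ E] [FiniteDimensional ℝ E]
  [MeasureSpace E] [BorelSpace E] [(volume : Measure E).IsAddHaarMeasure]

lemma inner_gradient_eq (κ : E → ℝ) (z a : E) :
    ⟪gradient κ z, a⟫ = fderiv ℝ κ z a := by
  rw [gradient, InnerProductSpace.toDual_symm_apply]

lemma norm_gradient_eq (κ : E → ℝ) (z : E) :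
    ‖gradient κ z‖ = ‖fderiv ℝ κ z‖ := by
  rw [gradient, LinearIsometryEquiv.norm_map]

lemma continuous_gradient {κ : E → ℝ} (h : ContDiff ℝ 1 κ) :
    Continuous (gradient κ) := by
  have := h.continuous_fderiv one_ne_zero
  exact (InnerProductSpace.toDual ℝ (E)).symm.continuous.comp this

lemma hasCompactSupport_gradient {κ : E → ℝ} (h : HasCompactSupport κ) :
    HasCompactSupport (gradient κ) := by
  have := h.fderiv ℝ
  exact this.comp_left (g := (InnerProductSpace.toDual ℝ (E)).symm) (map_zero _)

lemma hasFDerivAt_comp_affine {F : Type*} [NormedAddCommGroup F] [NormedSpace ℝ F]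
    {U : E → F} (y : E) (t : ℝ) (z : E) (hU : DifferentiableAt ℝ U (y + t • z)) :
    HasFDerivAt (fun z => U (y + t • z)) (t • fderiv ℝ U (y + t • z)) z := by
  have h1 : HasFDerivAt (fun z : E => y + t • z) (t • ContinuousLinearMap.id ℝ (E)) z :=
    ((hasFDerivAt_id z).const_smul t).const_add y
  have := hU.hasFDerivAt.comp z h1
  have h2 : (fderiv ℝ U (y + t • z)).comp (t • ContinuousLinearMap.id ℝ E) =
      t • fderiv ℝ U (y + t • z) := by ext v; simp
  rw [h2] at this
  exact this

/-- Integration by parts. -/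
lemma ibp {U : E → ℝ} (hU : ContDiff ℝ 1 U) {κ : E → ℝ} (hκ : ContDiff ℝ 1 κ)
    (hc : HasCompactSupport κ) (y a : E) (t : ℝ) :
    t * ∫ z, κ z * ⟪gradient U (y + t • z), a⟫ = - ∫ z, fderiv ℝ κ z a * U (y + t • z) := by
  have hUc := hU.continuous
  have hgc := continuous_gradient hU
  have hκc := hκ.continuous
  have hκ'c := hκ.continuous_fderiv one_ne_zero
  have hd : ∀ z, fderiv ℝ (fun z => U (y + t • z)) z a = t * ⟪gradient U (y + t • z), a⟫ := by
    intro z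
    rw [(hasFDerivAt_comp_affine y t z (hU.differentiable one_ne_zero _)).fderiv,
      inner_gradient_eq]
    simp
  have key := integral_mul_fderiv_eq_neg_fderiv_mul_of_integrable (μ := volume)
    (f := κ) (g := fun z => U (y + t • z)) (v := a) ?_ ?_ ?_ ?_ ?_
  · rw [← key, ← integral_const_mul]
    congr 1; ext z; rw [hd]; ring
  · exact Continuous.integrable_of_hasCompactSupport (by fun_prop) (hc.fderiv_apply ℝ a).mul_right
  · simp_rw [hd]
    exact Continuous.integrable_of_hasCompactSupport (by fun_prop) hc.mul_right
  · exact Continuous.integrable_of_hasCompactSupport (by fun_prop) hc.mul_right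
  · exact fun z _ => hκ.differentiable one_ne_zero z
  · exact fun z _ => (hasFDerivAt_comp_affine y t z
      (hU.differentiable one_ne_zero _)).differentiableAt

/-- Vector form of integration by parts. -/
lemma ibp_vec {U : E → ℝ} (hU : ContDiff ℝ 1 U) {κ : E → ℝ} (hκ : ContDiff ℝ 1 κ)
    (hc : HasCompactSupport κ) (y : E) (t : ℝ) :
    t • ∫ z, κ z • gradient U (y + t • z) = - ∫ z, U (y + t • z) • gradient κ z := by
  have hUc := hU.continuous
  have hgc := continuous_gradient hU
  have hgκ := continuous_gradient hκ
  have hκc := hκ.continuous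
  have i1 : Integrable (fun z => κ z • gradient U (y + t • z)) :=
    Continuous.integrable_of_hasCompactSupport (by fun_prop) hc.smul_right
  have i2 : Integrable (fun z => U (y + t • z) • gradient κ z) :=
    Continuous.integrable_of_hasCompactSupport (by fun_prop)
      (hasCompactSupport_gradient hc).smul_left
  refine ext_inner_left ℝ fun a => ?_
  rw [inner_smul_right, inner_neg_right, ← integral_inner i1, ← integral_inner i2]
  have := ibp hU hκ hc y a t
  have e1 : ∀ z, ⟪a, κ z • gradient U (y + t • z)⟫ = κ z * ⟪gradient U (y + t • z), a⟫ := by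
    intro z; rw [inner_smul_right, real_inner_comm]
  have e2 : ∀ z, ⟪a, U (y + t • z) • gradient κ z⟫ = fderiv ℝ κ z a * U (y + t • z) := by
    intro z; rw [inner_smul_right, real_inner_comm, inner_gradient_eq]; ring
  simp_rw [e1, e2]
  exact this

/-- Exchange of derivatives under the integral sign. -/
lemma swap {U : E → ℝ} (hU : ContDiff ℝ 1 U) {κ : E → ℝ} (hκ : ContDiff ℝ 2 κ)
    (hc : HasCompactSupport κ) (y a b : E) {t : ℝ} (ht : t ≠ 0) :
    ∫ z, fderiv ℝ κ z a * ⟪gradient U (y + t • z), b⟫ =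
      ∫ z, fderiv ℝ κ z b * ⟪gradient U (y + t • z), a⟫ := by
  have hf : ContDiff ℝ 1 (fderiv ℝ κ) := hκ.fderiv_right (by norm_num)
  have h1 : ∀ a, ContDiff ℝ 1 (fun z => fderiv ℝ κ z a) := fun a => hf.clm_apply contDiff_const
  have e1 := ibp hU (h1 a) (hc.fderiv_apply ℝ a) y b t
  have e2 := ibp hU (h1 b) (hc.fderiv_apply ℝ b) y a t
  have : ∀ z, fderiv ℝ (fun z => fderiv ℝ κ z a) z b = fderiv ℝ (fun z => fderiv ℝ κ z b) z a := by
    intro z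
    have hs : IsSymmSndFDerivAt ℝ κ z :=
      hκ.contDiffAt.isSymmSndFDerivAt (by simp)
    have hd := hf.differentiable one_ne_zero z
    rw [fderiv_clm_apply hd (differentiableAt_const _), fderiv_clm_apply hd (differentiableAt_const _)]
    simpa using hs.eq b a
  simp_rw [this] at e1
  exact mul_left_cancel₀ ht (e1.trans e2.symm)

lemma swap_vec {U : E → ℝ} (hU : ContDiff ℝ 1 U) {κ : E → ℝ} (hκ : ContDiff ℝ 2 κ)
    (hc : HasCompactSupport κ) (y a : E) {t : ℝ} (ht : t ≠ 0) :
    ∫ z, fderiv ℝ κ z a • gradient U (y + t • z) =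
      ∫ z, ⟪gradient U (y + t • z), a⟫ • gradient κ z := by
  have hgc := continuous_gradient hU
  have hκ1 : ContDiff ℝ 1 κ := hκ.of_le (by norm_num)
  have hgκ := continuous_gradient hκ1
  have hκ'c := hκ1.continuous_fderiv one_ne_zero
  have i1 : Integrable (fun z => fderiv ℝ κ z a • gradient U (y + t • z)) :=
    Continuous.integrable_of_hasCompactSupport (by fun_prop) (hc.fderiv_apply ℝ a).smul_right
  have i2 : Integrable (fun z => ⟪gradient U (y + t • z), a⟫ • gradient κ z) :=
    Continuous.integrable_of_hasCompactSupport (by fun_prop)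
      (hasCompactSupport_gradient hc).smul_left
  refine ext_inner_left ℝ fun b => ?_
  rw [← integral_inner i1, ← integral_inner i2]
  have := swap hU hκ hc y a b ht
  have e1 : ∀ z, ⟪b, fderiv ℝ κ z a • gradient U (y + t • z)⟫ =
      fderiv ℝ κ z a * ⟪gradient U (y + t • z), b⟫ := by
    intro z; rw [inner_smul_right, real_inner_comm]
  have e2 : ∀ z, ⟪b, ⟪gradient U (y + t • z), a⟫ • gradient κ z⟫ =
      fderiv ℝ κ z b * ⟪gradient U (y + t • z), a⟫ := by
    intro z; rw [inner_smul_right, real_inner_comm _ b, inner_gradient_eq κ]; ring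
  simp_rw [e1, e2]
  exact this

/-- Only the symmetric part of a constant matrix matters. -/
lemma transpose_swap {U : E → ℝ} (hU : ContDiff ℝ 1 U) {κ : E → ℝ}
    (hκ : ContDiff ℝ 2 κ) (hc : HasCompactSupport κ) (y : E) {t : ℝ} (ht : t ≠ 0)
    (A : E →L[ℝ] E) :
    ∫ z, fderiv ℝ κ z (A (gradient U (y + t • z))) =
      ∫ z, fderiv ℝ κ z (ContinuousLinearMap.adjoint A (gradient U (y + t • z))) := by
  have hgc := continuous_gradient hU
  have hκ1 : ContDiff ℝ 1 κ := hκ.of_le (by norm_num)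
  have hκ'c := hκ1.continuous_fderiv one_ne_zero
  let e := stdOrthonormalBasis ℝ E
  have ii : ∀ a b : E, Integrable (fun z => fderiv ℝ κ z a * ⟪gradient U (y + t • z), b⟫) :=
    fun a b => Continuous.integrable_of_hasCompactSupport (by fun_prop)
      (hc.fderiv_apply ℝ a).mul_right
  have l : ∀ z, fderiv ℝ κ z (A (gradient U (y + t • z))) =
      ∑ i, fderiv ℝ κ z (A (e i)) * ⟪gradient U (y + t • z), e i⟫ := by
    intro z
    conv_lhs => rw [← e.sum_repr' (gradient U (y + t • z))]
    simp only [map_sum, map_smul, smul_eq_mul]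
    refine Finset.sum_congr rfl fun i _ => ?_
    rw [real_inner_comm]; ring
  have r : ∀ z, fderiv ℝ κ z (ContinuousLinearMap.adjoint A (gradient U (y + t • z))) =
      ∑ i, fderiv ℝ κ z (e i) * ⟪gradient U (y + t • z), A (e i)⟫ := by
    intro z
    conv_lhs => rw [← e.sum_repr' (ContinuousLinearMap.adjoint A (gradient U (y + t • z)))]
    simp only [map_sum, map_smul, smul_eq_mul]
    refine Finset.sum_congr rfl fun i _ => ?_
    rw [real_inner_comm, ContinuousLinearMap.adjoint_inner_left]; ring
  simp_rw [l, r]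
  rw [integral_finsetSum _ fun i _ => ii _ _, integral_finsetSum _ fun i _ => ii _ _]
  exact Finset.sum_congr rfl fun i _ => swap hU hκ hc y _ _ ht

lemma sym_swap {U : E → ℝ} (hU : ContDiff ℝ 1 U) {Φ : E → E}
    (hΦ : ContDiff ℝ 2 Φ) (hc : HasCompactSupport Φ) (y : E) {t : ℝ} (ht : t ≠ 0)
    (A Q : E →L[ℝ] E) (hQ : Q = (1 / 2 : ℝ) • (A + ContinuousLinearMap.adjoint A)) :
    ∫ z, fderiv ℝ Φ z (Q (gradient U (y + t • z))) =
      ∫ z, fderiv ℝ Φ z (A (gradient U (y + t • z))) := by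
  have hgc := continuous_gradient hU
  have hΦ1 : ContDiff ℝ 1 Φ := hΦ.of_le (by norm_num)
  have hΦ'c := hΦ1.continuous_fderiv one_ne_zero
  have ii : ∀ B : E →L[ℝ] E, Integrable (fun z => fderiv ℝ Φ z (B (gradient U (y + t • z)))) := by
    intro B
    refine Continuous.integrable_of_hasCompactSupport (by fun_prop) ?_
    refine (hc.fderiv ℝ).mono ?_
    intro z hz
    contrapose! hz
    simp only [Function.mem_support, not_not] at hz ⊢
    simp [hz]
  refine ext_inner_left ℝ fun e => ?_
  rw [← integral_inner (ii Q), ← integral_inner (ii A)]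
  have hκ : ContDiff ℝ 2 (fun z => ⟪e, Φ z⟫) := contDiff_const.inner ℝ hΦ
  have hκc : HasCompactSupport (fun z => ⟪e, Φ z⟫) :=
    hc.comp_left (g := fun v => ⟪e, v⟫) (inner_zero_right _)
  have hd : ∀ z v, fderiv ℝ (fun z => ⟪e, Φ z⟫) z v = ⟪e, fderiv ℝ Φ z v⟫ := by
    intro z v
    rw [fderiv_inner_apply ℝ (differentiableAt_const _) (hΦ1.differentiable one_ne_zero z)]
    simp
  have := transpose_swap hU hκ hκc y ht A
  simp_rw [hd] at this
  subst hQ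
  simp only [_root_.smul_apply, _root_.add_apply, map_smul, map_add,
    inner_smul_right, inner_add_right]
  rw [integral_const_mul, integral_add ((ii A).const_inner e) ((ii _).const_inner e), ← this]
  ring

/-- Derivative in the scale parameter. -/
lemma scale_deriv {U : E → ℝ} (hU : ContDiff ℝ 1 U) {κ : E → ℝ}
    (hκ : ContDiff ℝ 1 κ) (hc : HasCompactSupport κ) (y : E) {t : ℝ} (ht : 0 < t) :
    HasDerivAt (fun t : ℝ => ∫ z, κ z • gradient U (y + t • z))
      (-(1 / t) • ((∫ z, κ z • gradient U (y + t • z)) +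
        ∫ z, ⟪gradient U (y + t • z), z⟫ • gradient κ z)) t := by
  have hUc := hU.continuous
  have hgc := continuous_gradient hU
  have hgκ := continuous_gradient hκ
  have hκc := hκ.continuous
  have hcg := hasCompactSupport_gradient hc
  -- derivative of the auxiliary integral
  have h1 : HasDerivAt (fun t : ℝ => ∫ z, U (y + t • z) • gradient κ z)
      (∫ z, ⟪gradient U (y + t • z), z⟫ • gradient κ z) t := by
    have hcont : Continuous (fun p : ℝ × E => ⟪gradient U (y + p.1 • p.2), p.2⟫ • gradient κ p.2) := by
      fun_prop
    obtain ⟨M, hM⟩ := ((isCompact_Icc (a := t - 1) (b := t + 1)).prod hcg.isCompact).exists_bound_of_continuousOn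
      hcont.continuousOn
    refine (hasDerivAt_integral_of_dominated_loc_of_deriv_le (μ := volume)
      (F := fun (t : ℝ) z => U (y + t • z) • gradient κ z)
      (F' := fun (t : ℝ) z => ⟪gradient U (y + t • z), z⟫ • gradient κ z)
      (bound := (tsupport (gradient κ)).indicator (fun _ => M))
      (s := Set.Icc (t - 1) (t + 1)) (Icc_mem_nhds (by linarith) (by linarith)) ?_ ?_ ?_ ?_ ?_ ?_).2
    · exact Eventually.of_forall fun s => Continuous.aestronglyMeasurable (by fun_prop)
    · exact Continuous.integrable_of_hasCompactSupport (by fun_prop) hcg.smul_left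
    · exact Continuous.aestronglyMeasurable (by fun_prop)
    · refine Eventually.of_forall fun z s hs => ?_
      by_cases hz : z ∈ tsupport (gradient κ)
      · rw [Set.indicator_of_mem hz]; exact hM (s, z) ⟨hs, hz⟩
      · rw [Set.indicator_of_notMem hz, image_eq_zero_of_notMem_tsupport hz]; simp
    · rw [integrable_indicator_iff (isClosed_tsupport _).measurableSet]
      exact integrableOn_const (hcg.isCompact.measure_lt_top.ne)
    · refine Eventually.of_forall fun z s hs => ?_
      have hl : HasDerivAt (fun s : ℝ => y + s • z) z s := by
        simpa using ((hasDerivAt_id s).smul_const z).const_add y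
      have := (hU.differentiable one_ne_zero (y + s • z)).hasFDerivAt.comp_hasDerivAt s hl
      rw [inner_gradient_eq]
      exact this.smul_const _
  have h2 := ((hasDerivAt_inv ht.ne').smul h1).neg
  have heq : (fun t : ℝ => ∫ z, κ z • gradient U (y + t • z)) =ᶠ[𝓝 t]
      -((fun t : ℝ => t⁻¹) • fun t : ℝ => ∫ z, U (y + t • z) • gradient κ z) := by
    filter_upwards [lt_mem_nhds ht] with s hs
    have := ibp_vec hU hκ hc y s
    rw [eq_comm, neg_eq_iff_eq_neg] at this
    simp [this, smul_smul, hs.ne']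
  refine (h2.congr_of_eventuallyEq heq).congr_deriv ?_
  have := ibp_vec hU hκ hc y t
  rw [eq_comm, neg_eq_iff_eq_neg] at this
  rw [this]
  simp only [smul_neg, neg_smul, smul_add, neg_add, smul_smul]
  have e1 : -(t ^ 2)⁻¹ * t = -(1/t) := by field_simp
  rw [e1, one_div]
  simp only [neg_smul]
  abel

end Abstract

/-! ### Part 2: kernels -/

section Abstract2

set_option linter.unusedSectionVars false

variable {E : Type*} [NormedAddCommGroup E] [InnerProductSpace ℝ E] [FiniteDimensional ℝ E]
  [MeasureSpace E] [BorelSpace E] [(volume : Measure E).IsAddHaarMeasure]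

/-- A pair of kernels adapted to the constant symmetric matrix `Q`. -/
structure IsKer (ψ : E → ℝ) (Φ : E → E) (Q : E →L[ℝ] E) : Prop where
  smψ : ContDiff ℝ (⊤ : ℕ∞) ψ
  smΦ : ContDiff ℝ (⊤ : ℕ∞) Φ
  suppψ : tsupport ψ ⊆ closedBall 0 1
  suppΦ : tsupport Φ ⊆ closedBall 0 1
  rel : ∀ z v, fderiv ℝ Φ z (Q v) = ψ z • v + ⟪v, z⟫ • gradient ψ z
  mean : ∫ z, Φ z = 0

lemma IsKer.csψ {ψ : E → ℝ} {Φ : E → E} {Q : E →L[ℝ] E} (h : IsKer ψ Φ Q) :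
    HasCompactSupport ψ :=
  (isCompact_closedBall (0 : E) 1).of_isClosed_subset (isClosed_tsupport _) h.suppψ

lemma IsKer.csΦ {ψ : E → ℝ} {Φ : E → E} {Q : E →L[ℝ] E} (h : IsKer ψ Φ Q) :
    HasCompactSupport Φ :=
  (isCompact_closedBall (0 : E) 1).of_isClosed_subset (isClosed_tsupport _) h.suppΦ

lemma snd_symm {F : Type*} [NormedAddCommGroup F] [NormedSpace ℝ F] {κ : E → F}
    (hκ : ContDiff ℝ 2 κ) (z a b : E) :
    fderiv ℝ (fun z => fderiv ℝ κ z a) z b = fderiv ℝ (fun z => fderiv ℝ κ z b) z a := by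
  have hf : ContDiff ℝ 1 (fderiv ℝ κ) := hκ.fderiv_right (by norm_num)
  have hs : IsSymmSndFDerivAt ℝ κ z :=
    hκ.contDiffAt.isSymmSndFDerivAt (by simp)
  have hd := hf.differentiable one_ne_zero z
  rw [fderiv_clm_apply hd (differentiableAt_const _), fderiv_clm_apply hd (differentiableAt_const _)]
  simpa using hs.eq b a

lemma contDiff_fderiv_apply {F : Type*} [NormedAddCommGroup F] [NormedSpace ℝ F] {κ : E → F}
    (hκ : ContDiff ℝ (⊤ : ℕ∞) κ) (h : E) : ContDiff ℝ (⊤ : ℕ∞) (fun z => fderiv ℝ κ z h) := by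
  have : ContDiff ℝ (⊤ : ℕ∞) (fderiv ℝ κ) := hκ.fderiv_right (by simp)
  exact this.clm_apply contDiff_const

lemma fderiv_gradient {κ : E → ℝ} (hκ : ContDiff ℝ 2 κ) (z h : E) :
    fderiv ℝ (gradient κ) z h = gradient (fun z => fderiv ℝ κ z h) z := by
  have hf : ContDiff ℝ 1 (fderiv ℝ κ) := hκ.fderiv_right (by norm_num)
  have hd : DifferentiableAt ℝ (gradient κ) z :=
    (InnerProductSpace.toDual ℝ E).symm.differentiable.differentiableAt.comp z
      (hf.differentiable one_ne_zero z)
  refine ext_inner_right ℝ fun a => ?_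
  rw [inner_gradient_eq, ← snd_symm hκ z a h]
  have : (fun z => fderiv ℝ κ z a) = fun z => ⟪gradient κ z, a⟫ := by
    ext z; rw [inner_gradient_eq]
  rw [this, fderiv_inner_apply ℝ hd (differentiableAt_const _)]
  simp

lemma IsKer.rel' {ψ : E → ℝ} {Φ : E → E} {Q : E →L[ℝ] E} (hk : IsKer ψ Φ Q) (z v h : E) :
    fderiv ℝ (fun z => fderiv ℝ Φ z h) z (Q v) =
      fderiv ℝ ψ z h • v + ⟪v, h⟫ • gradient ψ z +
        ⟪v, z⟫ • gradient (fun z => fderiv ℝ ψ z h) z := by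
  have hΦ2 : ContDiff ℝ 2 Φ := hk.smΦ.of_le (by norm_cast)
  have hψ2 : ContDiff ℝ 2 ψ := hk.smψ.of_le (by norm_cast)
  rw [snd_symm hΦ2, funext fun z => hk.rel z v]
  have hd1 : HasFDerivAt (fun z => ψ z • v) ((fderiv ℝ ψ z).smulRight v) z :=
    (hψ2.differentiable two_ne_zero z).hasFDerivAt.smul_const v
  have hf : ContDiff ℝ 1 (fderiv ℝ ψ) := hψ2.fderiv_right (by norm_num)
  have hd : DifferentiableAt ℝ (gradient ψ) z :=
    (InnerProductSpace.toDual ℝ E).symm.differentiable.differentiableAt.comp z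
      (hf.differentiable one_ne_zero z)
  have hd2 : HasFDerivAt (fun z => ⟪v, z⟫) (innerSL ℝ v) z := (innerSL ℝ v).hasFDerivAt
  have h3 := hd1.add (hd2.smul hd.hasFDerivAt)
  have h4 := h3.fderiv
  have h5 : (fun z => ψ z • v + ⟪v, z⟫ • gradient ψ z) =
    ((fun z => ψ z • v) + (fun z => ⟪v, z⟫) • gradient ψ) := rfl
  rw [h5, h4]
  simp [fderiv_gradient hψ2]
  abel

lemma integrable_fderiv_apply {F : Type*} [NormedAddCommGroup F] [NormedSpace ℝ F]
    {Φ : E → F} (hΦ : ContDiff ℝ (⊤ : ℕ∞) Φ) (hc : HasCompactSupport Φ) {W : E → E}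
    (hW : Continuous W) :
    Integrable (fun z => fderiv ℝ Φ z (W z)) := by
  have h1 : Continuous (fderiv ℝ Φ) := hΦ.continuous_fderiv (by simp)
  refine Continuous.integrable_of_hasCompactSupport (by fun_prop) ?_
  refine (hc.fderiv ℝ).mono ?_
  intro z hz
  contrapose! hz
  simp only [Function.mem_support, not_not] at hz ⊢
  simp [hz]

/-- Path identity for the kernel. -/
lemma path0 {U : E → ℝ} (hU : ContDiff ℝ 1 U) {ψ : E → ℝ} {Φ : E → E} {A Q : E →L[ℝ] E}
    (hk : IsKer ψ Φ Q) (hQ : Q = (1 / 2 : ℝ) • (A + ContinuousLinearMap.adjoint A))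
    (y : E) {t : ℝ} (ht : 0 < t) :
    HasDerivAt (fun t : ℝ => ∫ z, ψ z • gradient U (y + t • z))
      (-(1 / t) • ∫ z, fderiv ℝ Φ z (A (gradient U (y + t • z)))) t := by
  have hψ1 : ContDiff ℝ 1 ψ := hk.smψ.of_le (by norm_cast)
  have hΦ2 : ContDiff ℝ 2 Φ := hk.smΦ.of_le (by norm_cast)
  have hgc := continuous_gradient hU
  have hgψ := continuous_gradient hψ1
  have hψc := hψ1.continuous
  refine (scale_deriv hU hψ1 hk.csψ y ht).congr_deriv ?_
  rw [← sym_swap hU hΦ2 hk.csΦ y ht.ne' A Q hQ, ← integral_add]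
  · simp_rw [hk.rel]
  · exact Continuous.integrable_of_hasCompactSupport (by fun_prop) hk.csψ.smul_right
  · exact Continuous.integrable_of_hasCompactSupport (by fun_prop)
      (hasCompactSupport_gradient hk.csψ).smul_left

/-- Path identity for the derivative of the kernel. -/
lemma path1 {U : E → ℝ} (hU : ContDiff ℝ 1 U) {ψ : E → ℝ} {Φ : E → E} {A Q : E →L[ℝ] E}
    (hk : IsKer ψ Φ Q) (hQ : Q = (1 / 2 : ℝ) • (A + ContinuousLinearMap.adjoint A))
    (y h : E) {t : ℝ} (ht : 0 < t) :
    HasDerivAt (fun t : ℝ => t⁻¹ • ∫ z, fderiv ℝ ψ z h • gradient U (y + t • z))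
      (-(1 / t ^ 2) • ∫ z, fderiv ℝ (fun z => fderiv ℝ Φ z h) z (A (gradient U (y + t • z)))) t := by
  have hψ2 : ContDiff ℝ 2 ψ := hk.smψ.of_le (by norm_cast)
  have hψ1 : ContDiff ℝ 1 ψ := hk.smψ.of_le (by norm_cast)
  have hκ : ContDiff ℝ 1 (fun z => fderiv ℝ ψ z h) :=
    (contDiff_fderiv_apply hk.smψ h).of_le (by norm_cast)
  have hκc : HasCompactSupport (fun z => fderiv ℝ ψ z h) := hk.csψ.fderiv_apply ℝ h
  have hΦ2 : ContDiff ℝ 2 (fun z => fderiv ℝ Φ z h) :=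
    (contDiff_fderiv_apply hk.smΦ h).of_le (by norm_cast)
  have hΦc : HasCompactSupport (fun z => fderiv ℝ Φ z h) := hk.csΦ.fderiv_apply ℝ h
  have hgc := continuous_gradient hU
  have hgψ := continuous_gradient hψ1
  have hψc := hψ1.continuous
  have hgκ := continuous_gradient hκ
  have hκcont := hκ.continuous
  have := (hasDerivAt_inv ht.ne').smul (scale_deriv hU hκ hκc y ht)
  refine this.congr_deriv ?_
  rw [← sym_swap hU hΦ2 hΦc y ht.ne' A Q hQ]
  simp_rw [hk.rel']
  rw [integral_add, integral_add]
  · rw [← swap_vec hU hψ2 hk.csψ y h ht.ne']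
    simp only [smul_add, smul_smul]
    have e1 : t⁻¹ * -(1 / t) = -(1 / t ^ 2) := by field_simp
    have e2 : -(t ^ 2)⁻¹ = -(1 / t ^ 2) := by field_simp
    rw [e1, e2]
    module
  · exact Continuous.integrable_of_hasCompactSupport (by fun_prop) hκc.smul_right
  · exact Continuous.integrable_of_hasCompactSupport (by fun_prop)
      (hasCompactSupport_gradient hk.csψ).smul_left
  · refine Integrable.add ?_ ?_
    · exact Continuous.integrable_of_hasCompactSupport (by fun_prop) hκc.smul_right
    · exact Continuous.integrable_of_hasCompactSupport (by fun_prop)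
        (hasCompactSupport_gradient hk.csψ).smul_left
  · exact Continuous.integrable_of_hasCompactSupport (by fun_prop)
      (hasCompactSupport_gradient hκc).smul_left

/-- Growth estimate from a power bound of the derivative. -/
lemma growth {F : Type*} [NormedAddCommGroup F] [NormedSpace ℝ F] {f f' : ℝ → F} {s t D β : ℝ}
    (hs : 0 < s) (hst : s ≤ t) (hβ : β ≠ 0)
    (hf : ∀ τ ∈ Set.Icc s t, HasDerivAt f (f' τ) τ)
    (hb : ∀ τ ∈ Set.Icc s t, ‖f' τ‖ ≤ D * τ ^ (β - 1)) :
    ‖f t - f s‖ ≤ D * ((t ^ β - s ^ β) / β) := by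
  have hB : ∀ x ∈ Set.Icc s t, HasDerivAt (fun x : ℝ => D * ((x ^ β - s ^ β) / β)) (D * x ^ (β - 1)) x := by
    intro x hx
    have hx0 : x ≠ 0 := (hs.trans_le hx.1).ne'
    have := (((Real.hasDerivAt_rpow_const (p := β) (Or.inl hx0)).sub_const (s ^ β)).div_const β).const_mul D
    refine this.congr_deriv ?_
    field_simp
  refine image_norm_le_of_norm_deriv_right_le_deriv_boundary' (f := fun x => f x - f s) (f' := f')
    (B := fun x : ℝ => D * ((x ^ β - s ^ β) / β)) (B' := fun x => D * x ^ (β - 1)) (a := s) (b := t)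
    ?_ ?_ ?_ ?_ ?_ ?_ (Set.right_mem_Icc.2 hst)
  · exact fun x hx => ((hf x hx).sub_const _).continuousAt.continuousWithinAt
  · exact fun x hx => ((hf x (Set.Ico_subset_Icc_self hx)).sub_const _).hasDerivWithinAt
  · simp
  · exact fun x hx => (hB x hx).continuousAt.continuousWithinAt
  · exact fun x hx => (hB x (Set.Ico_subset_Icc_self hx)).hasDerivWithinAt
  · exact fun x hx => hb x (Set.Ico_subset_Icc_self hx)

end Abstract2

/-! ### Part 3: construction of the kernels -/

lemma exists_cutoff (σ : ℝ) : ∃ χ : ℝ → ℝ, ContDiff ℝ (⊤ : ℕ∞) χ ∧ (∀ s, 0 ≤ χ s) ∧ (∀ s, χ s ≤ 1) ∧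
    χ 0 = 1 ∧ (∀ s, 2 ≤ σ * s → χ s = 0) ∧ ∃ L, 0 ≤ L ∧ ∀ s, |deriv χ s| ≤ L := by
  have hsm : ContDiff ℝ (⊤ : ℕ∞) Real.smoothTransition := Real.smoothTransition.contDiff
  have hcd : Continuous (deriv Real.smoothTransition) := hsm.continuous_deriv (by simp)
  have hz : ∀ x, x ∉ Set.Icc (0 : ℝ) 1 → deriv Real.smoothTransition x = 0 := by
    intro x hx
    rw [Set.mem_Icc, not_and_or, not_le, not_le] at hx
    rcases hx with hx | hx
    · have : Real.smoothTransition =ᶠ[𝓝 x] fun _ => (0 : ℝ) := by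
        filter_upwards [gt_mem_nhds hx] with y hy using Real.smoothTransition.zero_of_nonpos hy.le
      rw [this.deriv_eq]; simp
    · have : Real.smoothTransition =ᶠ[𝓝 x] fun _ => (1 : ℝ) := by
        filter_upwards [lt_mem_nhds hx] with y hy using Real.smoothTransition.one_of_one_le hy.le
      rw [this.deriv_eq]; simp
  obtain ⟨M, hM⟩ := (isCompact_Icc (a := (0 : ℝ)) (b := 1)).exists_bound_of_continuousOn
    hcd.continuousOn
  have hM0 : 0 ≤ M := (norm_nonneg _).trans (hM 0 (by simp))
  have hM' : ∀ x, |deriv Real.smoothTransition x| ≤ M := by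
    intro x
    by_cases hx : x ∈ Set.Icc (0 : ℝ) 1
    · exact hM x hx
    · rw [hz x hx]; simpa using hM0
  refine ⟨fun s => Real.smoothTransition (2 - σ * s), ?_, fun s => Real.smoothTransition.nonneg _,
    fun s => Real.smoothTransition.le_one _, ?_, ?_, M * |σ|, by positivity, ?_⟩
  · exact hsm.comp (by fun_prop)
  · exact Real.smoothTransition.one_of_one_le (by norm_num)
  · intro s hs
    exact Real.smoothTransition.zero_of_nonpos (by linarith)
  · intro s
    have h1 : HasDerivAt (fun s : ℝ => 2 - σ * s) (-σ) s := by
      simpa using ((hasDerivAt_id s).const_mul σ).const_sub 2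
    have h2 := (hsm.differentiable (by simp) (2 - σ * s)).hasDerivAt.comp s h1
    have h3 : deriv (fun s => Real.smoothTransition (2 - σ * s)) s = _ := h2.deriv
    rw [h3, abs_mul, abs_neg]
    exact mul_le_mul_of_nonneg_right (hM' _) (abs_nonneg _)

section Abstract3

set_option linter.unusedSectionVars false

variable {E : Type*} [NormedAddCommGroup E] [InnerProductSpace ℝ E] [FiniteDimensional ℝ E]
  [MeasureSpace E] [BorelSpace E] [(volume : Measure E).IsAddHaarMeasure]

/-- Symmetric uniformly elliptic matrices. -/
structure Good (lam Lam : ℝ) (Q : E →L[ℝ] E) : Prop where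
  symm : ∀ a b, ⟪Q a, b⟫ = ⟪a, Q b⟫
  ell : ∀ v, lam * ‖v‖ ^ 2 ≤ ⟪Q v, v⟫
  bd : ∀ v, ‖Q v‖ ≤ Lam * ‖v‖

lemma Good.exists_inv {lam Lam : ℝ} (hlam : 0 < lam) {Q : E →L[ℝ] E} (h : Good lam Lam Q) :
    ∃ P : E →L[ℝ] E, (∀ v, P (Q v) = v) ∧ (∀ v, Q (P v) = v) := by
  have hinj : Function.Injective (Q : E →ₗ[ℝ] E) := by
    rw [injective_iff_map_eq_zero]
    intro v hv
    have := h.ell v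
    rw [show Q v = 0 from hv, inner_zero_left] at this
    have : ‖v‖ ^ 2 ≤ 0 := by nlinarith
    have : ‖v‖ = 0 := by nlinarith [norm_nonneg v]
    exact norm_eq_zero.1 this
  let e := (LinearEquiv.ofInjectiveEndo (Q : E →ₗ[ℝ] E) hinj)
  refine ⟨LinearMap.toContinuousLinearMap e.symm.toLinearMap, fun v => ?_, fun v => ?_⟩
  · exact e.symm_apply_apply v
  · exact e.apply_symm_apply v

lemma exists_kernels {lam Lam : ℝ} (hlam : 0 < lam) (hLam : 0 < Lam) :
    ∃ (K : ℝ) (ψ : (E →L[ℝ] E) → E → ℝ) (Φ : (E →L[ℝ] E) → E → E), 0 ≤ K ∧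
      ∀ Q, Good lam Lam Q → IsKer (ψ Q) (Φ Q) Q ∧ 0 < ∫ z, ψ Q z ∧
        (∀ z, ‖Φ Q z‖ ≤ K) ∧ (∀ z, ‖fderiv ℝ (Φ Q) z‖ ≤ K) ∧
        ∀ Q', Good lam Lam Q' → ∀ z, |ψ Q z - ψ Q' z| ≤ K * ‖Q - Q'‖ := by
  obtain ⟨χ, hχ, hχ0, hχ1, hχz, hχs, L, hL0, hL⟩ := exists_cutoff (2 * Lam ^ 2 / lam)
  have : ∀ Q : E →L[ℝ] E, ∃ P : E →L[ℝ] E, Good lam Lam Q → 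
      (∀ v, P (Q v) = v) ∧ (∀ v, Q (P v) = v) := by
    intro Q
    by_cases h : Good lam Lam Q
    · obtain ⟨P, hP⟩ := h.exists_inv hlam
      exact ⟨P, fun _ => hP⟩
    · exact ⟨0, fun h' => absurd h' h⟩
  choose P hP using this
  have hsym : ∀ Q, Good lam Lam Q → ∀ a b, ⟪P Q a, b⟫ = ⟪a, P Q b⟫ := by
    intro Q hQ a b
    conv_lhs => rw [← (hP Q hQ).2 b]
    rw [← hQ.symm, (hP Q hQ).2]
  have hPn : ∀ Q, Good lam Lam Q → ∀ z, ‖P Q z‖ ≤ lam⁻¹ * ‖z‖ := by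
    intro Q hQ z
    have h1 := hQ.ell (P Q z)
    rw [(hP Q hQ).2] at h1
    have h2 := real_inner_le_norm z (P Q z)
    rcases (norm_nonneg (P Q z)).eq_or_lt with h | h
    · rw [← h]; positivity
    · rw [inv_mul_eq_div, le_div_iff₀ hlam]
      nlinarith
  have hPe : ∀ Q, Good lam Lam Q → ∀ z, lam / Lam ^ 2 * ‖z‖ ^ 2 ≤ ⟪P Q z, z⟫ := by
    intro Q hQ z
    have h1 := hQ.ell (P Q z)
    have h2 := hQ.bd (P Q z)
    rw [(hP Q hQ).2] at h1 h2
    rw [real_inner_comm]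
    refine le_trans ?_ h1
    have h3 : ‖z‖ ^ 2 ≤ Lam ^ 2 * ‖P Q z‖ ^ 2 := by
      rw [← mul_pow]; exact pow_le_pow_left₀ (norm_nonneg _) h2 2
    calc lam / Lam ^ 2 * ‖z‖ ^ 2 ≤ lam / Lam ^ 2 * (Lam ^ 2 * ‖P Q z‖ ^ 2) := by gcongr
      _ = _ := by field_simp
  have hzero : ∀ Q, Good lam Lam Q → ∀ z, 1 ≤ ‖z‖ → χ ⟪P Q z, z⟫ = 0 := by
    intro Q hQ z hz
    refine hχs _ ?_
    have h1 := hPe Q hQ z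
    calc (2 : ℝ) ≤ 2 * ‖z‖ ^ 2 := by nlinarith
      _ = 2 * Lam ^ 2 / lam * (lam / Lam ^ 2 * ‖z‖ ^ 2) := by field_simp
      _ ≤ _ := by gcongr
  have hdψ : ∀ Q, Good lam Lam Q → ∀ z, HasFDerivAt (fun z => χ ⟪P Q z, z⟫)
      ((2 * deriv χ ⟪P Q z, z⟫) • innerSL ℝ (P Q z)) z := by
    intro Q hQ z
    have h1 : HasFDerivAt (fun z => ⟪P Q z, z⟫) ((2 : ℝ) • innerSL ℝ (P Q z)) z := by
      have := (P Q).hasFDerivAt (x := z) |>.inner ℝ (hasFDerivAt_id z)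
      refine this.congr_fderiv ?_
      ext v
      simp [fderivInnerCLM_apply, hsym Q hQ v z, real_inner_comm (P Q z) v]
      ring
    have h2 := HasDerivAt.comp_hasFDerivAt (h₂ := χ) (f := fun z => ⟪P Q z, z⟫) z
      (hχ.differentiable (by simp) ⟪P Q z, z⟫).hasDerivAt h1
    refine h2.congr_fderiv ?_
    ext v; simp; ring
  have hgψ : ∀ Q, Good lam Lam Q → ∀ z, gradient (fun z => χ ⟪P Q z, z⟫) z =
      (2 * deriv χ ⟪P Q z, z⟫) • P Q z := by
    intro Q hQ z
    refine ext_inner_right ℝ fun v => ?_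
    rw [inner_gradient_eq, (hdψ Q hQ z).fderiv]
    simp [inner_smul_left]
  have hdΦ : ∀ Q, Good lam Lam Q → ∀ z, HasFDerivAt (fun z => χ ⟪P Q z, z⟫ • P Q z)
      (χ ⟪P Q z, z⟫ • P Q + ((2 * deriv χ ⟪P Q z, z⟫) • innerSL ℝ (P Q z)).smulRight (P Q z)) z :=
    fun Q hQ z => (hdψ Q hQ z).smul (P Q).hasFDerivAt
  have hsuppψ : ∀ Q, Good lam Lam Q → tsupport (fun z => χ ⟪P Q z, z⟫) ⊆ closedBall 0 1 := by
    intro Q hQ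
    refine closure_minimal (fun z hz => ?_) isClosed_closedBall
    by_contra h
    rw [mem_closedBall_zero_iff, not_le] at h
    exact hz (hzero Q hQ z h.le)
  have hsuppΦ : ∀ Q, Good lam Lam Q → tsupport (fun z => χ ⟪P Q z, z⟫ • P Q z) ⊆ closedBall 0 1 := by
    intro Q hQ
    refine closure_minimal (fun z hz => ?_) isClosed_closedBall
    by_contra h
    rw [mem_closedBall_zero_iff, not_le] at h
    exact hz (by simp [hzero Q hQ z h.le])
  have hsmψ : ∀ Q, ContDiff ℝ (⊤ : ℕ∞) (fun z => χ ⟪P Q z, z⟫) := fun Q =>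
    hχ.comp ((P Q).contDiff.inner ℝ contDiff_id)
  refine ⟨lam⁻¹ + 2 * L * (lam⁻¹ * lam⁻¹), fun Q z => χ ⟪P Q z, z⟫,
    fun Q z => χ ⟪P Q z, z⟫ • P Q z, by positivity, ?_⟩
  intro Q hQ
  refine ⟨⟨hsmψ Q, (hsmψ Q).smul (P Q).contDiff, hsuppψ Q hQ, hsuppΦ Q hQ, ?_, ?_⟩, ?_, ?_, ?_, ?_⟩
  · intro z v
    rw [(hdΦ Q hQ z).fderiv, hgψ Q hQ z]
    simp [(hP Q hQ).1, hsym Q hQ, smul_smul]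
    rw [real_inner_comm v z]; congr 1; ring
  · have h1 := integral_neg_eq_self (fun z => χ ⟪P Q z, z⟫ • P Q z) (volume : Measure E)
    simp only [map_neg, inner_neg_left, inner_neg_right, neg_neg, smul_neg] at h1
    rw [integral_neg] at h1
    have h2 : (2 : ℝ) • (∫ z, χ ⟪P Q z, z⟫ • P Q z) = 0 := by
      rw [two_smul]
      nth_rewrite 1 [← h1]
      exact neg_add_cancel _
    exact (smul_eq_zero.1 h2).resolve_left two_ne_zero
  · refine Continuous.integral_pos_of_hasCompactSupport_nonneg_nonzero (x := 0)
      (hsmψ Q).continuous ?_ (fun z => hχ0 _) ?_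
    · exact (isCompact_closedBall (0 : E) 1).of_isClosed_subset (isClosed_tsupport _) (hsuppψ Q hQ)
    · simp [hχz]
  · intro z
    rcases le_or_gt ‖z‖ 1 with hz | hz
    · rw [norm_smul, Real.norm_of_nonneg (hχ0 _)]
      have h1 := hPn Q hQ z
      have h2 : ‖P Q z‖ ≤ lam⁻¹ := h1.trans (mul_le_of_le_one_right (by positivity) hz)
      calc χ ⟪P Q z, z⟫ * ‖P Q z‖ ≤ 1 * lam⁻¹ := by gcongr; exact hχ1 _
        _ ≤ _ := by rw [one_mul]; exact le_add_of_nonneg_right (by positivity)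
    · simp only [hzero Q hQ z hz.le, zero_smul, norm_zero]; positivity
  · intro z
    rcases le_or_gt ‖z‖ 1 with hz | hz
    · rw [(hdΦ Q hQ z).fderiv]
      have h1 := hPn Q hQ z
      have h2 : ‖P Q z‖ ≤ lam⁻¹ := h1.trans (mul_le_of_le_one_right (by positivity) hz)
      have h3 : ‖P Q‖ ≤ lam⁻¹ := ContinuousLinearMap.opNorm_le_bound _ (by positivity) (hPn Q hQ)
      refine (norm_add_le _ _).trans (add_le_add ?_ ?_)
      · rw [norm_smul, Real.norm_of_nonneg (hχ0 _)]
        calc χ ⟪P Q z, z⟫ * ‖P Q‖ ≤ 1 * lam⁻¹ := by gcongr; exact hχ1 _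
          _ = _ := one_mul _
      · rw [ContinuousLinearMap.norm_smulRight_apply, norm_smul, innerSL_apply_norm, norm_mul,
          Real.norm_eq_abs, Real.norm_eq_abs, abs_two, mul_assoc]
        gcongr
        exact hL _
    · have : z ∉ tsupport (fun z => χ ⟪P Q z, z⟫ • P Q z) := fun h => by
        have := hsuppΦ Q hQ h
        rw [mem_closedBall_zero_iff] at this
        linarith
      rw [fderiv_of_notMem_tsupport ℝ this, norm_zero]; positivity
  · intro Q' hQ' z
    rcases le_or_gt ‖z‖ 1 with hz | hz
    · have hlip : |χ ⟪P Q z, z⟫ - χ ⟪P Q' z, z⟫| ≤ L * |⟪P Q z, z⟫ - ⟪P Q' z, z⟫| := by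
        have := Convex.norm_image_sub_le_of_norm_deriv_le (f := χ) (C := L) (s := Set.univ)
          (fun x _ => hχ.differentiable (by simp) x) (fun x _ => hL x) convex_univ
          (Set.mem_univ ⟪P Q' z, z⟫) (Set.mem_univ ⟪P Q z, z⟫)
        simpa using this
      have hid : P Q z - P Q' z = P Q ((Q' - Q) (P Q' z)) := by
        simp [(hP Q hQ).1, (hP Q' hQ').2]
      have h1 : |⟪P Q z, z⟫ - ⟪P Q' z, z⟫| ≤ lam⁻¹ * lam⁻¹ * ‖Q - Q'‖ := by
        rw [← inner_sub_left, hid]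
        calc |⟪P Q ((Q' - Q) (P Q' z)), z⟫| ≤ ‖P Q ((Q' - Q) (P Q' z))‖ * ‖z‖ :=
              abs_real_inner_le_norm _ _
          _ ≤ ‖P Q ((Q' - Q) (P Q' z))‖ * 1 := by gcongr
          _ ≤ lam⁻¹ * (‖Q' - Q‖ * (lam⁻¹ * 1)) := by
            rw [mul_one]
            refine (hPn Q hQ _).trans ?_
            gcongr
            refine ((Q' - Q).le_opNorm _).trans ?_
            gcongr
            refine (hPn Q' hQ' z).trans ?_
            gcongr
          _ = _ := by rw [norm_sub_rev]; ring
      calc |χ ⟪P Q z, z⟫ - χ ⟪P Q' z, z⟫| ≤ L * (lam⁻¹ * lam⁻¹ * ‖Q - Q'‖) :=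
            hlip.trans (by gcongr)
        _ = (0 + 1 * L * (lam⁻¹ * lam⁻¹)) * ‖Q - Q'‖ := by ring
        _ ≤ _ := by gcongr; · positivity
                    · norm_num
    · simp only [hzero Q hQ z hz.le, hzero Q' hQ' z hz.le, sub_zero, abs_zero]
      positivity

end Abstract3

/-! ### Part 4: Taylor bounds, shifted kernels -/

section Abstract4

set_option linter.unusedSectionVars false

variable {E : Type*} [NormedAddCommGroup E] [InnerProductSpace ℝ E] [FiniteDimensional ℝ E]
  [MeasureSpace E] [BorelSpace E] [(volume : Measure E).IsAddHaarMeasure]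
  {F : Type*} [NormedAddCommGroup F] [NormedSpace ℝ F]

lemma norm_integral_le_ball {g : E → F} {R C : ℝ} (hz : ∀ z, z ∉ closedBall (0 : E) R → g z = 0)
    (hC : ∀ z ∈ closedBall (0 : E) R, ‖g z‖ ≤ C) :
    ‖∫ z, g z‖ ≤ C * (volume : Measure E).real (closedBall (0 : E) R) := by
  rw [← setIntegral_eq_integral_of_forall_compl_eq_zero hz]
  exact norm_setIntegral_le_of_norm_le_const measure_closedBall_lt_top hC

lemma bounded_of_cs {κ : E → F} (hκ : Continuous κ) (hc : HasCompactSupport κ) :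
    ∃ C : ℝ, 0 ≤ C ∧ ∀ z, ‖κ z‖ ≤ C := by
  obtain ⟨C, hC⟩ := hκ.bounded_above_of_compact_support hc
  exact ⟨C, (norm_nonneg _).trans (hC 0), hC⟩

lemma lip_bounds {κ : E → F} (hκ : ContDiff ℝ (⊤ : ℕ∞) κ) (hc : HasCompactSupport κ) :
    ∃ C : ℝ, 0 ≤ C ∧ (∀ z w, ‖κ (z - w) - κ z‖ ≤ C * ‖w‖) := by
  obtain ⟨C, hC0, hC⟩ := bounded_of_cs (hκ.continuous_fderiv (by simp)) (hc.fderiv ℝ)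
  refine ⟨C, hC0, fun z w => ?_⟩
  have := Convex.norm_image_sub_le_of_norm_fderiv_le (𝕜 := ℝ) (f := κ) (C := C) (s := Set.univ)
    (fun x _ => hκ.differentiable (by simp) x) (fun x _ => hC x) convex_univ
    (Set.mem_univ z) (Set.mem_univ (z - w))
  simpa using this

lemma taylor_bounds {κ : E → F} (hκ : ContDiff ℝ (⊤ : ℕ∞) κ) (hc : HasCompactSupport κ) :
    ∃ C : ℝ, 0 ≤ C ∧ (∀ z w, ‖κ (z - w) - κ z‖ ≤ C * ‖w‖) ∧
      (∀ z w, ‖κ (z - w) - κ z + fderiv ℝ κ z w‖ ≤ C * ‖w‖ ^ 2) := by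
  obtain ⟨C1, hC1, h1⟩ := lip_bounds hκ hc
  have hκ' : ContDiff ℝ (⊤ : ℕ∞) (fderiv ℝ κ) := hκ.fderiv_right (by simp)
  obtain ⟨C2, hC2, h2⟩ := lip_bounds hκ' (hc.fderiv ℝ)
  refine ⟨max C1 C2, by positivity, fun z w => (h1 z w).trans (by gcongr; exact le_max_left _ _),
    fun z w => ?_⟩
  have := Convex.norm_image_sub_le_of_norm_hasFDerivWithin_le' (𝕜 := ℝ) (f := κ)
    (f' := fderiv ℝ κ) (φ := fderiv ℝ κ z) (C := C2 * ‖w‖) (s := closedBall z ‖w‖) (x := z)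
    (y := z - w)
    (fun x _ => (hκ.differentiable (by simp) x).hasFDerivAt.hasFDerivWithinAt) ?_
    (convex_closedBall _ _) (by simp) (by simp)
  · calc ‖κ (z - w) - κ z + fderiv ℝ κ z w‖ = ‖κ (z - w) - κ z - fderiv ℝ κ z (z - w - z)‖ := by
          congr 1
          rw [show z - w - z = - w by abel, map_neg, sub_neg_eq_add]
      _ ≤ C2 * ‖w‖ * ‖z - w - z‖ := this
      _ = C2 * ‖w‖ ^ 2 := by rw [show z - w - z = - w by abel, norm_neg]; ring
      _ ≤ _ := by gcongr; exact le_max_right _ _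
  · intro x hx
    have h3 := h2 z (z - x)
    rw [sub_sub_cancel] at h3
    refine h3.trans ?_
    rw [mem_closedBall, dist_comm, dist_eq_norm] at hx
    gcongr

lemma eq_zero_off {κ : E → F} {R : ℝ} (h : tsupport κ ⊆ closedBall 0 R) {z : E}
    (hz : z ∉ closedBall (0 : E) R) : κ z = 0 := image_eq_zero_of_notMem_tsupport fun h' => hz (h h')

lemma tsupport_sub_closedBall {κ : E → F} {R : ℝ} (h : ∀ z, R < ‖z‖ → κ z = 0) :
    tsupport κ ⊆ closedBall 0 R := by
  refine closure_minimal (fun z hz => ?_) isClosed_closedBall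
  by_contra h'
  rw [mem_closedBall_zero_iff, not_le] at h'
  exact hz (h z h')

/-- Test fields obtained by shifting `Φ`. -/
lemma shift_fields {Φ : E → E} (hΦ : ContDiff ℝ (⊤ : ℕ∞) Φ) (hs : tsupport Φ ⊆ closedBall 0 1)
    (hm : ∫ z, Φ z = 0) :
    ∃ C : ℝ, 0 ≤ C ∧
    (∀ w : E, ‖w‖ ≤ 1 → ∃ Θ : E → E, ContDiff ℝ (⊤ : ℕ∞) Θ ∧ tsupport Θ ⊆ closedBall 0 2 ∧
      (∫ z, Θ z = 0) ∧ (∀ z, ‖Θ z‖ ≤ C * ‖w‖) ∧ (∀ z, ‖fderiv ℝ Θ z‖ ≤ C * ‖w‖) ∧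
      ∀ z, fderiv ℝ Θ z = fderiv ℝ Φ (z - w) - fderiv ℝ Φ z) ∧
    (∀ w : E, ‖w‖ ≤ 1 → ∃ Θ : E → E, ContDiff ℝ (⊤ : ℕ∞) Θ ∧ tsupport Θ ⊆ closedBall 0 2 ∧
      (∫ z, Θ z = 0) ∧ (∀ z, ‖Θ z‖ ≤ C * ‖w‖ ^ 2) ∧ (∀ z, ‖fderiv ℝ Θ z‖ ≤ C * ‖w‖ ^ 2) ∧
      ∀ z, fderiv ℝ Θ z = fderiv ℝ Φ (z - w) - fderiv ℝ Φ z +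
        fderiv ℝ (fun z => fderiv ℝ Φ z w) z) ∧
    (∀ w : E, ContDiff ℝ (⊤ : ℕ∞) (fun z => fderiv ℝ Φ z w) ∧
      tsupport (fun z => fderiv ℝ Φ z w) ⊆ closedBall 0 2 ∧
      (∫ z, fderiv ℝ Φ z w = 0) ∧ (∀ z, ‖fderiv ℝ Φ z w‖ ≤ C * ‖w‖) ∧
      (∀ z, ‖fderiv ℝ (fun z => fderiv ℝ Φ z w) z‖ ≤ C * ‖w‖)) := by
  have hc : HasCompactSupport Φ :=
    (isCompact_closedBall (0 : E) 1).of_isClosed_subset (isClosed_tsupport _) hs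
  have hΦ' : ContDiff ℝ (⊤ : ℕ∞) (fderiv ℝ Φ) := hΦ.fderiv_right (by simp)
  have hc' := hc.fderiv ℝ
  obtain ⟨C1, hC1, h1, h2⟩ := taylor_bounds hΦ hc
  obtain ⟨C2, hC2, h3, h4⟩ := taylor_bounds hΦ' hc'
  obtain ⟨C3, hC3, h5⟩ := bounded_of_cs hΦ'.continuous hc'
  obtain ⟨C4, hC4, h6⟩ := bounded_of_cs (hΦ'.continuous_fderiv (by simp)) (hc'.fderiv ℝ)
  set C := C1 + C2 + C3 + C4 with hC
  have hIntg : Integrable Φ := hΦ.continuous.integrable_of_hasCompactSupport hc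
  have hD : ∀ z w, fderiv ℝ (fun z => fderiv ℝ Φ z w) z = fderiv ℝ (fderiv ℝ Φ) z w := by
    intro z w
    ext1 v
    rw [snd_symm (hΦ.of_le (by norm_cast)),
      fderiv_clm_apply (hΦ'.differentiable (by simp) z) (differentiableAt_const _)]
    simp
  have hout : ∀ z, 1 < ‖z‖ → Φ z = 0 := fun z hz => eq_zero_off hs (by simpa using hz)
  have hout' : ∀ z, 1 < ‖z‖ → fderiv ℝ Φ z = 0 := fun z hz =>
    fderiv_of_notMem_tsupport ℝ (fun h => by have := hs h; simp at this; linarith)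
  have hsm : ∀ w, ContDiff ℝ (⊤ : ℕ∞) (fun z => Φ (z - w)) := fun w =>
    hΦ.comp (contDiff_id.sub contDiff_const)
  have hsd : ∀ w z, fderiv ℝ (fun z => Φ (z - w)) z = fderiv ℝ Φ (z - w) := fun w z =>
    fderiv_comp_sub w
  have hshift : ∀ w : E, ∫ z, Φ (z - w) = 0 := fun w => by
    rw [integral_sub_right_eq_self (fun z => Φ z) w, hm]
  have hmd : ∀ w, ∫ z, fderiv ℝ Φ z w = 0 := fun w => by
    have := integral_smul_fderiv_eq_neg_fderiv_smul_of_integrable (μ := (volume : Measure E))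
      (f := fun _ => (1 : ℝ)) (g := Φ) (v := w) (by simp)
      (by
        simp only [one_smul]
        exact (contDiff_fderiv_apply hΦ w).continuous.integrable_of_hasCompactSupport
          (hc.fderiv_apply ℝ w))
      (by simpa using hIntg) (by simp) (fun x _ => hΦ.differentiable (by simp) x)
    simpa using this
  have hder2 : ∀ z w, fderiv ℝ (fun z => Φ (z - w) - Φ z + fderiv ℝ Φ z w) z =
      fderiv ℝ Φ (z - w) - fderiv ℝ Φ z + fderiv ℝ (fun z => fderiv ℝ Φ z w) z := fun z w => by
    rw [fderiv_fun_add (((hsm w).sub hΦ).differentiable (by simp) z)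
      ((contDiff_fderiv_apply hΦ w).differentiable (by simp) z),
      fderiv_fun_sub ((hsm w).differentiable (by simp) z) (hΦ.differentiable (by simp) z), hsd]
  have hout2 : ∀ z w : E, ‖w‖ ≤ 1 → 2 < ‖z‖ → Φ (z - w) = 0 := fun z w hw hz => by
    refine hout _ ?_
    have := norm_sub_norm_le z w
    linarith
  refine ⟨C, by positivity, fun w hw => ⟨fun z => Φ (z - w) - Φ z, (hsm w).sub hΦ, ?_, ?_, ?_, ?_, ?_⟩,
    fun w hw => ⟨fun z => Φ (z - w) - Φ z + fderiv ℝ Φ z w,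
      ((hsm w).sub hΦ).add (contDiff_fderiv_apply hΦ w), ?_, ?_, ?_, ?_, ?_⟩,
    fun w => ⟨contDiff_fderiv_apply hΦ w, ?_, hmd w, ?_, ?_⟩⟩
  · refine tsupport_sub_closedBall fun z hz => ?_
    rw [hout2 z w hw hz, hout z (by linarith), sub_zero]
  · rw [integral_sub (hIntg.comp_sub_right w) hIntg, hshift, hm, sub_zero]
  · intro z
    refine (h1 z w).trans ?_
    gcongr
    linarith
  · intro z
    rw [fderiv_fun_sub ((hsm w).differentiable (by simp) z) (hΦ.differentiable (by simp) z), hsd]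
    refine (h3 z w).trans ?_
    gcongr
    linarith
  · intro z
    rw [fderiv_fun_sub ((hsm w).differentiable (by simp) z) (hΦ.differentiable (by simp) z), hsd]
  · refine tsupport_sub_closedBall fun z hz => ?_
    rw [hout2 z w hw hz, hout z (by linarith), hout' z (by linarith)]
    simp
  · have i1 : Integrable (fun z => Φ (z - w) - Φ z) := (hIntg.comp_sub_right w).sub hIntg
    have i2 : Integrable (fun z => fderiv ℝ Φ z w) :=
      (contDiff_fderiv_apply hΦ w).continuous.integrable_of_hasCompactSupport
          (hc.fderiv_apply ℝ w)
    rw [integral_add i1 i2, integral_sub (hIntg.comp_sub_right w) hIntg, hshift, hm, hmd, sub_zero,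
      zero_add]
  · intro z
    refine (h2 z w).trans ?_
    gcongr
    linarith
  · intro z
    rw [hder2 z w, hD]
    refine (h4 z w).trans ?_
    gcongr
    linarith
  · intro z
    rw [hder2 z w]
  · refine tsupport_sub_closedBall fun z hz => ?_
    rw [hout' z (by linarith)]
    simp
  · intro z
    refine ((fderiv ℝ Φ z).le_opNorm w).trans ?_
    gcongr
    refine (h5 z).trans ?_
    linarith
  · intro z
    rw [hD]
    refine ((fderiv ℝ (fderiv ℝ Φ) z).le_opNorm w).trans ?_
    gcongr
    refine (h6 z).trans ?_
    linarith

end Abstract4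

/-! ### Part 5: the set-up and comparison of averages with point values -/

section Abstract5

set_option linter.unusedSectionVars false

variable {E : Type*} [NormedAddCommGroup E] [InnerProductSpace ℝ E] [FiniteDimensional ℝ E]
  [MeasureSpace E] [BorelSpace E] [(volume : Measure E).IsAddHaarMeasure]

/-- The symmetric part. -/
noncomputable def symPart (A : E →L[ℝ] E) : E →L[ℝ] E := (1 / 2 : ℝ) • (A + ContinuousLinearMap.adjoint A)

/-- The standing assumptions of the abstract argument. -/
structure Setup (U : E → ℝ) (A : E → E →L[ℝ] E) (x₀ : E) (α lam Lam M t₀ C₁ Vm : ℝ) : Prop where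
  hU : ContDiff ℝ 1 U
  α0 : 0 < α
  α1 : α < 1
  lam0 : 0 < lam
  Lam0 : 0 < Lam
  t0 : 0 < t₀
  t1 : t₀ ≤ 1
  C0 : 0 ≤ C₁
  M0 : 0 ≤ M
  Vb : ∀ y, ‖gradient U y‖ ≤ Vm
  crit : gradient U x₀ = 0
  good : ∀ y ∈ closedBall x₀ t₀, Good lam Lam (symPart (A y))
  hol : ∀ y ∈ closedBall x₀ t₀, ‖symPart (A y) - symPart (A x₀)‖ ≤ M * ‖y - x₀‖ ^ α
  key : ∀ x₁ ∈ closedBall x₀ t₀, ∀ t, 0 < t → t ≤ t₀ → ∀ Θ : E → E, ContDiff ℝ (⊤ : ℕ∞) Θ →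
    tsupport Θ ⊆ closedBall 0 2 → (∫ z, Θ z = 0) → ∀ K, 0 ≤ K → (∀ z, ‖Θ z‖ ≤ K) →
    (∀ z, ‖fderiv ℝ Θ z‖ ≤ K) → ∀ B, (∀ y ∈ closedBall x₁ (2 * t), ‖gradient U y‖ ≤ B) →
    ‖∫ z, fderiv ℝ Θ z (A x₁ (gradient U (x₁ + t • z)))‖ ≤ C₁ * K * (t ^ α * B + t ^ (1 + α))

lemma continuous_J {ψ : E → ℝ} (hψ : Continuous ψ) (hc : HasCompactSupport ψ) {V : E → E}
    (hV : Continuous V) {Vm : ℝ} (hb : ∀ y, ‖V y‖ ≤ Vm) (y : E) :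
    Continuous fun t : ℝ => ∫ z, ψ z • V (y + t • z) := by
  refine continuous_of_dominated (bound := fun z => ‖ψ z‖ * Vm) ?_ ?_ ?_ ?_
  · intro t
    exact (by fun_prop : Continuous fun z => ψ z • V (y + t • z)).aestronglyMeasurable
  · intro t
    refine Eventually.of_forall fun z => ?_
    rw [norm_smul]
    gcongr
    exact hb _
  · exact ((hψ.integrable_of_hasCompactSupport hc).norm).mul_const _
  · exact Eventually.of_forall fun z => by fun_prop

lemma integrable_J {ψ : E → ℝ} (hψ : Continuous ψ) (hc : HasCompactSupport ψ) {V : E → E}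
    (hV : Continuous V) (y : E) (t : ℝ) : Integrable fun z => ψ z • V (y + t • z) :=
  Continuous.integrable_of_hasCompactSupport (by fun_prop) hc.smul_right

lemma scale_bound {C₁ K τ t α B : ℝ} (hC : 0 ≤ C₁) (hK : 0 ≤ K) (hτ : 0 < τ) (hτt : τ ≤ t) :
    1 / τ * (C₁ * K * (τ ^ α * B + τ ^ (1 + α))) ≤ C₁ * K * (B + t) * τ ^ (α - 1) := by
  rw [Real.rpow_add hτ, Real.rpow_one, Real.rpow_sub_one hτ.ne']
  have h : 0 < τ ^ α := by positivity
  calc 1 / τ * (C₁ * K * (τ ^ α * B + τ * τ ^ α)) = C₁ * K * (B + τ) * (τ ^ α / τ) := by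
        field_simp
    _ ≤ _ := by gcongr

lemma Elemma {U : E → ℝ} {A : E → E →L[ℝ] E} {x₀ : E} {α lam Lam M t₀ C₁ Vm : ℝ}
    (S : Setup U A x₀ α lam Lam M t₀ C₁ Vm) :
    ∃ (ψ : E → ℝ) (Φ : E → E) (C : ℝ), IsKer ψ Φ (symPart (A x₀)) ∧ 0 < ∫ z, ψ z ∧ 0 ≤ C ∧
      ∀ t, 0 < t → t ≤ t₀ → ∀ y ∈ closedBall x₀ t, ∀ B,
        (∀ x ∈ closedBall x₀ (3 * t), ‖gradient U x‖ ≤ B) →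
        ‖(∫ z, ψ z • gradient U (y + t • z)) - (∫ z, ψ z) • gradient U y‖ ≤
          C * (t ^ α * B + t ^ (1 + α)) := by
  obtain ⟨K, ψ, Φ, hK, hk⟩ := exists_kernels (E := E) S.lam0 S.Lam0
  have hg0 : Good lam Lam (symPart (A x₀)) := S.good x₀ (mem_closedBall_self S.t0.le)
  have hV := continuous_gradient S.hU
  obtain ⟨hk0, hpos, -, -, -⟩ := hk _ hg0
  set vol := (volume : Measure E).real (closedBall (0 : E) 1) with hvol
  have hvol0 : 0 ≤ vol := measureReal_nonneg
  have α0 := S.α0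
  have M0 := S.M0
  have C0 := S.C0
  refine ⟨ψ (symPart (A x₀)), Φ (symPart (A x₀)), C₁ * K / α + 2 * (K * M * vol), hk0, hpos,
    by positivity, ?_⟩
  intro t ht htt y hy B hB
  have hyt : y ∈ closedBall x₀ t₀ := closedBall_subset_closedBall htt hy
  have hy' : ‖y - x₀‖ ≤ t := by rwa [← dist_eq_norm]
  have hB0 : 0 ≤ B := (norm_nonneg _).trans (hB x₀ (mem_closedBall_self (by linarith)))
  obtain ⟨hky, -, hΦb, hΦb', hψd⟩ := hk _ (S.good y hyt)
  set k := ψ (symPart (A y)) with hkdef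
  set k0 := ψ (symPart (A x₀)) with hk0def
  set G := Φ (symPart (A y)) with hG
  -- step 1
  have step1 : ∀ s, 0 < s → s ≤ t → ‖(∫ z, k z • gradient U (y + t • z)) -
      ∫ z, k z • gradient U (y + s • z)‖ ≤ C₁ * K * (B + t) * (t ^ α / α) := by
    intro s hs hst
    refine (growth (f := fun t : ℝ => ∫ z, k z • gradient U (y + t • z))
      (D := C₁ * K * (B + t)) hs hst α0.ne'
      (fun τ hτ => path0 S.hU hky rfl y (hs.trans_le hτ.1)) ?_).trans ?_
    · intro τ hτ
      have hτ0 := hs.trans_le hτ.1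
      rw [norm_smul, norm_neg, Real.norm_of_nonneg (by positivity)]
      refine le_trans ?_ (scale_bound (B := B) C0 hK hτ0 hτ.2)
      gcongr
      refine S.key y hyt τ hτ0 (hτ.2.trans htt) G hky.smΦ
        (hky.suppΦ.trans (closedBall_subset_closedBall (by norm_num))) hky.mean K hK hΦb hΦb' B ?_
      intro x hx
      refine hB x ?_
      rw [mem_closedBall] at hx hy ⊢
      have := dist_triangle x y x₀
      linarith [hτ.2]
    · have : 0 ≤ s ^ α := by positivity
      gcongr
      linarith
  have step2 : ‖(∫ z, k z • gradient U (y + t • z)) - (∫ z, k z) • gradient U y‖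
      ≤ C₁ * K * (B + t) * (t ^ α / α) := by
    have hcont := continuous_J hky.smψ.continuous hky.csψ hV S.Vb y
    have hl : Tendsto (fun s : ℝ => ‖(∫ z, k z • gradient U (y + t • z)) -
      ∫ z, k z • gradient U (y + s • z)‖) (𝓝[>] 0) (𝓝 ‖(∫ z, k z • gradient U (y + t • z)) -
      ∫ z, k z • gradient U (y + (0 : ℝ) • z)‖) :=
      ((continuous_const.sub hcont).norm.tendsto 0).mono_left nhdsWithin_le_nhds
    simp only [zero_smul, add_zero] at hl
    rw [integral_smul_const] at hl
    refine le_of_tendsto hl ?_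
    filter_upwards [Ioc_mem_nhdsGT ht] with s hs using step1 s hs.1 hs.2
  have hdiff : ∀ z, |k z - k0 z| ≤ K * (M * t ^ α) := by
    intro z
    refine (hψd _ hg0 z).trans ?_
    gcongr
    refine (S.hol y hyt).trans ?_
    gcongr
  have hBt : ∀ z ∈ closedBall (0 : E) 1, ‖gradient U (y + t • z)‖ ≤ B := by
    intro z hz
    refine hB _ ?_
    rw [mem_closedBall, dist_eq_norm]
    rw [mem_closedBall_zero_iff] at hz
    calc ‖y + t • z - x₀‖ = ‖(y - x₀) + t • z‖ := by congr 1; abel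
      _ ≤ ‖y - x₀‖ + ‖t • z‖ := norm_add_le _ _
      _ ≤ t + t * 1 := by
        rw [norm_smul, Real.norm_of_nonneg ht.le]; gcongr
      _ ≤ _ := by linarith
  have hBy : ‖gradient U y‖ ≤ B := hB y (closedBall_subset_closedBall (by linarith) hy)
  have h3 : ‖(∫ z, k0 z • gradient U (y + t • z)) - ∫ z, k z • gradient U (y + t • z)‖ ≤
      K * (M * t ^ α) * B * vol := by
    rw [← integral_sub (integrable_J hk0.smψ.continuous hk0.csψ hV y t)
      (integrable_J hky.smψ.continuous hky.csψ hV y t)]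
    refine norm_integral_le_ball ?_ ?_
    · intro z hz
      rw [eq_zero_off hk0.suppψ hz, eq_zero_off hky.suppψ hz]; simp
    · intro z hz
      rw [← sub_smul, norm_smul, Real.norm_eq_abs, abs_sub_comm]
      exact mul_le_mul (hdiff z) (hBt z hz) (norm_nonneg _) (by positivity)
  have h4 : ‖(∫ z, k z) - ∫ z, k0 z‖ ≤ K * (M * t ^ α) * vol := by
    rw [← integral_sub (hky.smψ.continuous.integrable_of_hasCompactSupport hky.csψ)
      (hk0.smψ.continuous.integrable_of_hasCompactSupport hk0.csψ)]
    refine norm_integral_le_ball ?_ ?_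
    · intro z hz
      rw [eq_zero_off hk0.suppψ hz, eq_zero_off hky.suppψ hz]; simp
    · intro z hz
      exact hdiff z
  have hid : (∫ z, k0 z • gradient U (y + t • z)) - (∫ z, k0 z) • gradient U y =
      ((∫ z, k0 z • gradient U (y + t • z)) - ∫ z, k z • gradient U (y + t • z)) +
      ((∫ z, k z • gradient U (y + t • z)) - (∫ z, k z) • gradient U y) +
      ((∫ z, k z) - ∫ z, k0 z) • gradient U y := by module
  rw [hid]
  have h5 : ‖((∫ z, k z) - ∫ z, k0 z) • gradient U y‖ ≤ K * (M * t ^ α) * vol * B := by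
    rw [norm_smul]
    exact mul_le_mul h4 hBy (norm_nonneg _) (by positivity)
  refine (norm_add₃_le).trans ((add_le_add (add_le_add h3 step2) h5).trans ?_)
  have ht1 : t ^ (1 + α) = t * t ^ α := by rw [Real.rpow_add ht, Real.rpow_one]
  rw [ht1]
  have : 0 ≤ 2 * (K * M * vol) * (t * t ^ α) := by positivity
  have e : C₁ * K * (B + t) * (t ^ α / α) = C₁ * K / α * (t ^ α * B + t * t ^ α) := by
    field_simp
  rw [e]
  linarith

end Abstract5

/-! ### Part 6: growth estimates for differences of averages -/

section Abstract6

set_option linter.unusedSectionVars false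

variable {E : Type*} [NormedAddCommGroup E] [InnerProductSpace ℝ E] [FiniteDimensional ℝ E]
  [MeasureSpace E] [BorelSpace E] [(volume : Measure E).IsAddHaarMeasure]

/-- Averages of the gradient. -/
noncomputable def Jav (ψ : E → ℝ) (U : E → ℝ) (t : ℝ) (y : E) : E :=
  ∫ z, ψ z • gradient U (y + t • z)

/-- First order averages. -/
noncomputable def Mav (ψ : E → ℝ) (U : E → ℝ) (x₀ : E) (t : ℝ) (h : E) : E :=
  t⁻¹ • ∫ z, fderiv ℝ ψ z h • gradient U (x₀ + t • z)

lemma shift_int {F : Type*} [NormedAddCommGroup F] [NormedSpace ℝ F] (g : E → E → F) (V : E → E)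
    (x₀ h : E) {t : ℝ} (ht : 0 < t) :
    ∫ z, g z (V (x₀ + h + t • z)) = ∫ z, g (z - t⁻¹ • h) (V (x₀ + t • z)) := by
  rw [← integral_sub_right_eq_self (fun z => g z (V (x₀ + h + t • z))) (t⁻¹ • h)]
  have : ∀ z : E, x₀ + h + t • (z - t⁻¹ • h) = x₀ + t • z := by
    intro z
    rw [smul_sub, smul_smul, mul_inv_cancel₀ ht.ne', one_smul]; abel
  simp_rw [this]

lemma integrable_fd {Φ : E → E} (hΦ : ContDiff ℝ (⊤ : ℕ∞) Φ) (hc : HasCompactSupport Φ)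
    {V : E → E} (hV : Continuous V) (A : E →L[ℝ] E) (x₀ : E) (t : ℝ) :
    Integrable fun z => fderiv ℝ Φ z (A (V (x₀ + t • z))) :=
  integrable_fderiv_apply hΦ hc (by fun_prop)

lemma integrable_fd_shift {Φ : E → E} (hΦ : ContDiff ℝ (⊤ : ℕ∞) Φ) (hc : HasCompactSupport Φ)
    {V : E → E} (hV : Continuous V) (A : E →L[ℝ] E) (x₀ : E) (t : ℝ) (w : E) :
    Integrable fun z => fderiv ℝ Φ (z - w) (A (V (x₀ + t • z))) := by
  have := integrable_fderiv_apply (E := E) (W := fun z => A (V (x₀ + t • (z + w)))) hΦ hc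
    (by fun_prop)
  simpa using this.comp_sub_right w

lemma diffs {U : E → ℝ} {A : E → E →L[ℝ] E} {x₀ : E} {α lam Lam M t₀ C₁ Vm : ℝ}
    (S : Setup U A x₀ α lam Lam M t₀ C₁ Vm) {ψ : E → ℝ} {Φ : E → E}
    (hk : IsKer ψ Φ (symPart (A x₀))) :
    ∃ C : ℝ, 0 ≤ C ∧ ∀ s t a, 0 < s → s ≤ t → t ≤ t₀ → 0 ≤ a →
      (∀ τ ∈ Set.Icc s t, ∀ y ∈ closedBall x₀ (2 * τ), ‖gradient U y‖ ≤ 2 * a * τ) →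
      (∀ h, ‖h‖ ≤ s → ‖(Jav ψ U t (x₀ + h) - Jav ψ U t x₀) - (Jav ψ U s (x₀ + h) - Jav ψ U s x₀)‖
        ≤ C * (a + 1) * ‖h‖ * t ^ α) ∧
      (∀ h, ‖h‖ ≤ s → ‖(Jav ψ U t (x₀ + h) - Jav ψ U t x₀ + Mav ψ U x₀ t h) -
        (Jav ψ U s (x₀ + h) - Jav ψ U s x₀ + Mav ψ U x₀ s h)‖
        ≤ C * (a + 1) * ‖h‖ ^ 2 * s ^ (α - 1)) ∧
      (∀ h, ‖Mav ψ U x₀ t h - Mav ψ U x₀ s h‖ ≤ C * (a + 1) * ‖h‖ * t ^ α) := by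
  obtain ⟨C, hC, hs1, hs2, hs3⟩ := shift_fields hk.smΦ hk.suppΦ hk.mean
  have α0 := S.α0
  have α1 := S.α1
  have C0 := S.C0
  have hV := continuous_gradient S.hU
  have hx₀ : x₀ ∈ closedBall x₀ t₀ := mem_closedBall_self S.t0.le
  set A₀ := A x₀ with hA₀
  refine ⟨2 * C₁ * C / α + 2 * C₁ * C / (1 - α), ?_, ?_⟩
  · have : 0 < 1 - α := by linarith
    positivity
  intro s t a hs hst htt ha hB
  have h1α : 0 < 1 - α := by linarith
  have tα : 0 ≤ t ^ α := by have := hs.trans_le hst; positivity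
  have sα : 0 ≤ s ^ α := by positivity
  have hc1 : 0 ≤ 2 * C₁ * C / α := by positivity
  have hc2 : 0 ≤ 2 * C₁ * C / (1 - α) := by positivity
  have hd0 : ∀ y, ∀ τ ∈ Set.Icc s t, HasDerivAt (fun t => Jav ψ U t y)
      (-(1 / τ) • ∫ z, fderiv ℝ Φ z (A₀ (gradient U (y + τ • z)))) τ := fun y τ hτ =>
    path0 S.hU hk rfl y (hs.trans_le hτ.1)
  have hd1 : ∀ h, ∀ τ ∈ Set.Icc s t, HasDerivAt (fun t => Mav ψ U x₀ t h)
      (-(1 / τ ^ 2) • ∫ z, fderiv ℝ (fun z => fderiv ℝ Φ z h) z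
        (A₀ (gradient U (x₀ + τ • z)))) τ := fun h τ hτ =>
    path1 S.hU hk rfl x₀ h (hs.trans_le hτ.1)
  have hw : ∀ h : E, ‖h‖ ≤ s → ∀ τ ∈ Set.Icc s t, ‖τ⁻¹ • h‖ ≤ 1 := by
    intro h hh τ hτ
    have hτ0 := hs.trans_le hτ.1
    rw [norm_smul, norm_inv, Real.norm_of_nonneg hτ0.le, inv_mul_le_iff₀ hτ0]
    linarith [hτ.1]
  have key : ∀ τ ∈ Set.Icc s t, ∀ Θ : E → E, ContDiff ℝ (⊤ : ℕ∞) Θ → tsupport Θ ⊆ closedBall 0 2 →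
      (∫ z, Θ z = 0) → ∀ K, 0 ≤ K → (∀ z, ‖Θ z‖ ≤ K) → (∀ z, ‖fderiv ℝ Θ z‖ ≤ K) →
      ‖∫ z, fderiv ℝ Θ z (A₀ (gradient U (x₀ + τ • z)))‖ ≤ 2 * C₁ * K * (a + 1) * τ ^ (1 + α) := by
    intro τ hτ Θ h1 h2 h3 K hK h4 h5
    have hτ0 := hs.trans_le hτ.1
    refine (S.key x₀ hx₀ τ hτ0 (hτ.2.trans htt) Θ h1 h2 h3 K hK h4 h5 (2 * a * τ) (hB τ hτ)).trans ?_
    rw [Real.rpow_add hτ0, Real.rpow_one]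
    have : 0 ≤ C₁ * K * (τ * τ ^ α) := by positivity
    nlinarith
  have fin : ∀ D x, 0 ≤ x → D = 2 * C₁ * C * x →
      D * ((t ^ α - s ^ α) / α) ≤ (2 * C₁ * C / α + 2 * C₁ * C / (1 - α)) * x * t ^ α := by
    rintro D x hx rfl
    have e : 2 * C₁ * C * x * ((t ^ α - s ^ α) / α) =
      (2 * C₁ * C / α) * x * t ^ α - (2 * C₁ * C / α) * x * s ^ α := by
      field_simp
    rw [e]
    have h1 : 0 ≤ (2 * C₁ * C / (1 - α)) * x * t ^ α := by positivity
    have h2 : 0 ≤ (2 * C₁ * C / α) * x * s ^ α := by positivity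
    linarith
  refine ⟨?_, ?_, ?_⟩
  · intro h hh
    have hg := growth (f := fun t => Jav ψ U t (x₀ + h) - Jav ψ U t x₀)
      (D := 2 * C₁ * C * ((a + 1) * ‖h‖)) hs hst α0.ne'
      (fun τ hτ => (hd0 (x₀ + h) τ hτ).sub (hd0 x₀ τ hτ)) ?_
    · refine hg.trans ((fin _ ((a + 1) * ‖h‖) (by positivity) rfl).trans (le_of_eq (by ring)))
    · intro τ hτ
      have hτ0 := hs.trans_le hτ.1
      obtain ⟨Θ, hΘ1, hΘ2, hΘ3, hΘ4, hΘ5, hΘ6⟩ := hs1 _ (hw h hh τ hτ)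
      have e : (-(1 / τ) • ∫ z, fderiv ℝ Φ z (A₀ (gradient U (x₀ + h + τ • z)))) -
          (-(1 / τ) • ∫ z, fderiv ℝ Φ z (A₀ (gradient U (x₀ + τ • z)))) =
          -(1 / τ) • ∫ z, fderiv ℝ Θ z (A₀ (gradient U (x₀ + τ • z))) := by
        rw [← smul_sub]
        congr 1
        rw [shift_int (fun z v => fderiv ℝ Φ z (A₀ v)) (gradient U) x₀ h hτ0,
          ← integral_sub (integrable_fd_shift hk.smΦ hk.csΦ hV A₀ x₀ τ _)
            (integrable_fd hk.smΦ hk.csΦ hV A₀ x₀ τ)]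
        simp_rw [hΘ6]
        rfl
      rw [e, norm_smul, norm_neg, Real.norm_of_nonneg (by positivity)]
      have h1 := key τ hτ Θ hΘ1 hΘ2 hΘ3 _ (by positivity) hΘ4 hΘ5
      calc _ ≤ 1 / τ * _ := mul_le_mul_of_nonneg_left h1 (by positivity)
        _ = _ := by
          rw [norm_smul, norm_inv, Real.norm_of_nonneg hτ0.le, Real.rpow_add hτ0,
            Real.rpow_sub_one hτ0.ne', Real.rpow_one]
          field_simp
  · intro h hh
    have hg := growth (f := fun t => Jav ψ U t (x₀ + h) - Jav ψ U t x₀ + Mav ψ U x₀ t h)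
      (D := 2 * C₁ * C * ((a + 1) * ‖h‖ ^ 2)) (β := α - 1) hs hst (by linarith)
      (fun τ hτ => ((hd0 (x₀ + h) τ hτ).sub (hd0 x₀ τ hτ)).add (hd1 h τ hτ)) ?_
    · refine hg.trans ?_
      have e : 2 * C₁ * C * ((a + 1) * ‖h‖ ^ 2) * ((t ^ (α - 1) - s ^ (α - 1)) / (α - 1)) =
        (2 * C₁ * C / (1 - α)) * (a + 1) * ‖h‖ ^ 2 * (s ^ (α - 1) - t ^ (α - 1)) := by
        have : α - 1 ≠ 0 := by linarith
        field_simp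
        ring
      rw [e]
      have : 0 ≤ t ^ (α - 1) := by have := hs.trans_le hst; positivity
      have h2 : 0 ≤ s ^ (α - 1) := by positivity
      calc _ ≤ (2 * C₁ * C / (1 - α)) * (a + 1) * ‖h‖ ^ 2 * s ^ (α - 1) := by
            apply mul_le_mul_of_nonneg_left _ (by positivity)
            linarith
        _ ≤ _ := by
            gcongr
            linarith
    · intro τ hτ
      have hτ0 := hs.trans_le hτ.1
      obtain ⟨Θ, hΘ1, hΘ2, hΘ3, hΘ4, hΘ5, hΘ6⟩ := hs2 _ (hw h hh τ hτ)
      have hh2 : ∀ z v, fderiv ℝ (fun z => fderiv ℝ Φ z (τ⁻¹ • h)) z v =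
          τ⁻¹ • fderiv ℝ (fun z => fderiv ℝ Φ z h) z v := by
        intro z v
        simp_rw [map_smul]
        rw [fderiv_fun_const_smul ((contDiff_fderiv_apply hk.smΦ h).differentiable (by simp) z)]
        rfl
      have e : (-(1 / τ) • ∫ z, fderiv ℝ Φ z (A₀ (gradient U (x₀ + h + τ • z)))) -
          (-(1 / τ) • ∫ z, fderiv ℝ Φ z (A₀ (gradient U (x₀ + τ • z)))) +
          (-(1 / τ ^ 2) • ∫ z, fderiv ℝ (fun z => fderiv ℝ Φ z h) z
            (A₀ (gradient U (x₀ + τ • z)))) =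
          -(1 / τ) • ∫ z, fderiv ℝ Θ z (A₀ (gradient U (x₀ + τ • z))) := by
        have e2 : (-(1 / τ ^ 2) • ∫ z, fderiv ℝ (fun z => fderiv ℝ Φ z h) z
            (A₀ (gradient U (x₀ + τ • z)))) = -(1 / τ) • ∫ z,
            fderiv ℝ (fun z => fderiv ℝ Φ z (τ⁻¹ • h)) z (A₀ (gradient U (x₀ + τ • z))) := by
          simp_rw [hh2]
          rw [integral_smul, smul_smul]
          congr 1
          field_simp
        have i1 := integrable_fd_shift hk.smΦ hk.csΦ hV A₀ x₀ τ (τ⁻¹ • h)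
        have i2 := integrable_fd hk.smΦ hk.csΦ hV A₀ x₀ τ
        have i12 : Integrable fun z => fderiv ℝ Φ (z - τ⁻¹ • h) (A₀ (gradient U (x₀ + τ • z))) -
          fderiv ℝ Φ z (A₀ (gradient U (x₀ + τ • z))) := i1.sub i2
        have i3 := integrable_fd (contDiff_fderiv_apply hk.smΦ (τ⁻¹ • h))
          (hk.csΦ.fderiv_apply ℝ (τ⁻¹ • h)) hV A₀ x₀ τ
        rw [e2, ← smul_sub, ← smul_add]
        congr 1
        rw [shift_int (fun z v => fderiv ℝ Φ z (A₀ v)) (gradient U) x₀ h hτ0,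
          ← integral_sub i1 i2, ← integral_add i12 i3]
        simp_rw [hΘ6]
        rfl
      rw [e, norm_smul, norm_neg, Real.norm_of_nonneg (by positivity)]
      have h1 := key τ hτ Θ hΘ1 hΘ2 hΘ3 _ (by positivity) hΘ4 hΘ5
      calc _ ≤ 1 / τ * _ := mul_le_mul_of_nonneg_left h1 (by positivity)
        _ = _ := by
          rw [norm_smul, norm_inv, Real.norm_of_nonneg hτ0.le, Real.rpow_add hτ0,
            Real.rpow_sub_one hτ0.ne', Real.rpow_sub_one hτ0.ne', Real.rpow_one]
          field_simp
  · intro h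
    have hg := growth (f := fun t => Mav ψ U x₀ t h)
      (D := 2 * C₁ * C * ((a + 1) * ‖h‖)) hs hst α0.ne' (hd1 h) ?_
    · refine hg.trans ((fin _ ((a + 1) * ‖h‖) (by positivity) rfl).trans (le_of_eq (by ring)))
    · intro τ hτ
      have hτ0 := hs.trans_le hτ.1
      obtain ⟨g1, g2, g3, g4, g5⟩ := hs3 h
      rw [norm_smul, norm_neg, Real.norm_of_nonneg (by positivity)]
      have h1 := key τ hτ _ g1 g2 g3 _ (by positivity) g4 g5
      calc _ ≤ 1 / τ ^ 2 * _ := mul_le_mul_of_nonneg_left h1 (by positivity)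
        _ = _ := by
          rw [Real.rpow_add hτ0, Real.rpow_sub_one hτ0.ne', Real.rpow_one]
          field_simp

end Abstract6

/-! ### Part 7: linear growth and the abstract theorem -/

section Abstract7

set_option linter.unusedSectionVars false

variable {E : Type*} [NormedAddCommGroup E] [InnerProductSpace ℝ E] [FiniteDimensional ℝ E]
  [MeasureSpace E] [BorelSpace E] [(volume : Measure E).IsAddHaarMeasure]

lemma fixed_scale {U : E → ℝ} (hU : ContDiff ℝ 1 U) {Vm : ℝ} (hb : ∀ y, ‖gradient U y‖ ≤ Vm)
    {ψ : E → ℝ} (hψ : ContDiff ℝ (⊤ : ℕ∞) ψ) (hs : tsupport ψ ⊆ closedBall 0 1) (x₀ : E)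
    {t : ℝ} (ht : 0 < t) :
    ∃ C : ℝ, 0 ≤ C ∧ ∀ h : E, ‖h‖ ≤ t →
      ‖Jav ψ U t (x₀ + h) - Jav ψ U t x₀‖ ≤ C * ‖h‖ ∧
      ‖Jav ψ U t (x₀ + h) - Jav ψ U t x₀ + Mav ψ U x₀ t h‖ ≤ C * ‖h‖ ^ 2 := by
  have hV := continuous_gradient hU
  have hc : HasCompactSupport ψ :=
    (isCompact_closedBall (0 : E) 1).of_isClosed_subset (isClosed_tsupport _) hs
  have hVm : 0 ≤ Vm := (norm_nonneg _).trans (hb 0)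
  obtain ⟨C, hC, h1, h2⟩ := taylor_bounds hψ hc
  set vol := (volume : Measure E).real (closedBall (0 : E) 2) with hvol
  have hvol0 : 0 ≤ vol := measureReal_nonneg
  have hout : ∀ z, 1 < ‖z‖ → ψ z = 0 := fun z hz => eq_zero_off hs (by simpa using hz)
  have hout' : ∀ z, 1 < ‖z‖ → fderiv ℝ ψ z = 0 := fun z hz =>
    fderiv_of_notMem_tsupport ℝ (fun h => by have := hs h; simp at this; linarith)
  have hout2 : ∀ z w : E, ‖w‖ ≤ 1 → 2 < ‖z‖ → ψ (z - w) = 0 := fun z w hw hz => by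
    refine hout _ ?_
    have := norm_sub_norm_le z w
    linarith
  refine ⟨C * t⁻¹ * Vm * vol + C * t⁻¹ ^ 2 * Vm * vol, by positivity, fun h hh => ?_⟩
  have hw : ‖t⁻¹ • h‖ = t⁻¹ * ‖h‖ := by rw [norm_smul, norm_inv, Real.norm_of_nonneg ht.le]
  have hw1 : ‖t⁻¹ • h‖ ≤ 1 := by
    rw [hw, inv_mul_le_iff₀ ht]; linarith
  have i1 : Integrable fun z => ψ (z - t⁻¹ • h) • gradient U (x₀ + t • z) := by
    have := integrable_J hψ.continuous hc hV (x₀ + h) t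
    have h3 := this.comp_sub_right (t⁻¹ • h)
    have h4 : ∀ z : E, x₀ + h + t • (z - t⁻¹ • h) = x₀ + t • z := by
      intro z
      rw [smul_sub, smul_smul, mul_inv_cancel₀ ht.ne', one_smul]; abel
    simpa only [h4] using h3
  have i2 := integrable_J hψ.continuous hc hV x₀ t
  have i12 : Integrable fun z => ψ (z - t⁻¹ • h) • gradient U (x₀ + t • z) -
    ψ z • gradient U (x₀ + t • z) := i1.sub i2
  have i3 := integrable_J (contDiff_fderiv_apply hψ (t⁻¹ • h)).continuous
    (hc.fderiv_apply ℝ (t⁻¹ • h)) hV x₀ t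
  have eM : Mav ψ U x₀ t h = ∫ z, fderiv ℝ ψ z (t⁻¹ • h) • gradient U (x₀ + t • z) := by
    rw [Mav, ← integral_smul]
    simp_rw [map_smul, smul_assoc]
  have eJ : Jav ψ U t (x₀ + h) = ∫ z, ψ (z - t⁻¹ • h) • gradient U (x₀ + t • z) := by
    rw [Jav, shift_int (fun z v => ψ z • v) (gradient U) x₀ h ht]
  have hi : 0 ≤ t⁻¹ := by positivity
  constructor
  · rw [eJ, Jav, ← integral_sub i1 i2]
    have := norm_integral_le_ball (E := E) (R := 2) (C := C * (t⁻¹ * ‖h‖) * Vm)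
      (g := fun z => ψ (z - t⁻¹ • h) • gradient U (x₀ + t • z) - ψ z • gradient U (x₀ + t • z)) ?_ ?_
    · refine this.trans ?_
      have : 0 ≤ C * t⁻¹ ^ 2 * Vm * vol * ‖h‖ := by positivity
      rw [← hvol]
      linarith
    · intro z hz
      rw [mem_closedBall_zero_iff, not_le] at hz
      rw [hout2 z _ hw1 hz, hout z (by linarith)]; simp
    · intro z _
      rw [← sub_smul, norm_smul]
      gcongr
      · rw [← hw]; exact h1 z _
      · exact hb _
  · rw [eJ, eM, Jav, ← integral_sub i1 i2, ← integral_add i12 i3]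
    have := norm_integral_le_ball (E := E) (R := 2) (C := C * (t⁻¹ * ‖h‖) ^ 2 * Vm)
      (g := fun z => ψ (z - t⁻¹ • h) • gradient U (x₀ + t • z) - ψ z • gradient U (x₀ + t • z) +
        fderiv ℝ ψ z (t⁻¹ • h) • gradient U (x₀ + t • z)) ?_ ?_
    · refine this.trans ?_
      have : 0 ≤ C * t⁻¹ * Vm * vol * ‖h‖ ^ 2 := by positivity
      rw [← hvol, mul_pow]
      linarith
    · intro z hz
      rw [mem_closedBall_zero_iff, not_le] at hz
      rw [hout2 z _ hw1 hz, hout z (by linarith), hout' z (by linarith)]; simp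
    · intro z _
      rw [← sub_smul, ← add_smul, norm_smul]
      gcongr
      · rw [← hw]; exact h2 z _
      · exact hb _

lemma exists_small {α c D t₀ : ℝ} (hα : 0 < α) (hc : 0 < c) (hD : 0 ≤ D) (ht : 0 < t₀) :
    ∃ t, 0 < t ∧ t ≤ t₀ ∧ D * t ^ α ≤ c := by
  refine ⟨min t₀ ((c / (D + 1)) ^ (1 / α)), by positivity, min_le_left _ _, ?_⟩
  have h1 : (min t₀ ((c / (D + 1)) ^ (1 / α))) ^ α ≤ c / (D + 1) := by
    calc _ ≤ ((c / (D + 1)) ^ (1 / α)) ^ α := by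
          apply Real.rpow_le_rpow (by positivity) (min_le_right _ _) hα.le
      _ = c / (D + 1) := by
          rw [← Real.rpow_mul (by positivity), one_div_mul_cancel hα.ne', Real.rpow_one]
  calc _ ≤ D * (c / (D + 1)) := by gcongr
    _ = c * (D / (D + 1)) := by ring
    _ ≤ c * 1 := by
      gcongr
      rw [div_le_one (by positivity)]; linarith
    _ = c := mul_one c

lemma lin_growth {U : E → ℝ} {A : E → E →L[ℝ] E} {x₀ : E} {α lam Lam M t₀ C₁ Vm : ℝ}
    (S : Setup U A x₀ α lam Lam M t₀ C₁ Vm) {ψ : E → ℝ} {Φ : E → E}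
    (hk : IsKer ψ Φ (symPart (A x₀))) (hpos : 0 < ∫ z, ψ z) {CE : ℝ} (hCE : 0 ≤ CE)
    (hE : ∀ t, 0 < t → t ≤ t₀ → ∀ y ∈ closedBall x₀ t, ∀ B,
        (∀ x ∈ closedBall x₀ (3 * t), ‖gradient U x‖ ≤ B) →
        ‖Jav ψ U t y - (∫ z, ψ z) • gradient U y‖ ≤ CE * (t ^ α * B + t ^ (1 + α))) :
    ∃ t₁ a, 0 < t₁ ∧ t₁ ≤ t₀ ∧ 0 ≤ a ∧
      ∀ y ∈ closedBall x₀ (3 * t₁), ‖gradient U y‖ ≤ a * ‖y - x₀‖ := by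
  obtain ⟨CD, hCD, hD⟩ := diffs S hk
  have α0 := S.α0
  have hV := continuous_gradient S.hU
  set c₀ := ∫ z, ψ z with hc₀
  obtain ⟨t₁, ht₁, htt, hsmall⟩ := exists_small (α := α) (c := c₀ / 2) (D := 6 * CE + CD)
    α0 (by positivity) (by positivity) S.t0
  obtain ⟨Ck, hCk, hfix⟩ := fixed_scale S.hU S.Vb hk.smψ hk.suppψ x₀ ht₁
  have hVm : 0 ≤ Vm := (norm_nonneg _).trans (S.Vb 0)
  set C' := (2 * CE + CD + Ck) / c₀ with hC'
  have hC'0 : 0 ≤ C' := by positivity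
  have ht1α : t₁ ^ α ≤ 1 := Real.rpow_le_one ht₁.le (htt.trans S.t1) α0.le
  -- the uniform bound
  have main : ∀ ε, 0 < ε → ε ≤ t₁ → ∀ y ∈ closedBall x₀ (3 * t₁),
      ‖gradient U y‖ ≤ max (2 * C') (Vm / t₁) * max ‖y - x₀‖ ε := by
    intro ε hε hεt
    have hmpos : ∀ y : E, 0 < max ‖y - x₀‖ ε := fun y => lt_max_of_lt_right hε
    obtain ⟨ym, hym, hmax⟩ := (isCompact_closedBall x₀ (3 * t₁)).exists_isMaxOn
      (f := fun y => ‖gradient U y‖ / max ‖y - x₀‖ ε) ⟨x₀, mem_closedBall_self (by linarith)⟩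
      (ContinuousOn.div (by fun_prop) (by fun_prop) (fun y _ => (hmpos y).ne'))
    set a := ‖gradient U ym‖ / max ‖ym - x₀‖ ε with ha
    have ha0 : 0 ≤ a := div_nonneg (norm_nonneg _) (hmpos _).le
    have hVa : ∀ y ∈ closedBall x₀ (3 * t₁), ‖gradient U y‖ ≤ a * max ‖y - x₀‖ ε := by
      intro y hy
      have := hmax hy
      simp only [Set.mem_ofPred_eq] at this
      rwa [div_le_iff₀ (hmpos y)] at this
    suffices hle : a ≤ max (2 * C') (Vm / t₁) by
      intro y hy
      exact (hVa y hy).trans (mul_le_mul_of_nonneg_right hle (hmpos y).le)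
    rcases le_or_gt ‖ym - x₀‖ t₁ with hr | hr
    · set s := max ‖ym - x₀‖ ε with hs
      have hs0 : 0 < s := hmpos ym
      have hst : s ≤ t₁ := max_le hr hεt
      have hB : ∀ x ∈ closedBall x₀ (3 * s), ‖gradient U x‖ ≤ 3 * a * s := by
        intro x hx
        refine (hVa x (closedBall_subset_closedBall (by linarith) hx)).trans ?_
        rw [mem_closedBall, dist_eq_norm] at hx
        have : max ‖x - x₀‖ ε ≤ 3 * s := max_le hx (by linarith [le_max_right ‖ym - x₀‖ ε])
        nlinarith
      have hB2 : ∀ τ ∈ Set.Icc s t₁, ∀ y ∈ closedBall x₀ (2 * τ), ‖gradient U y‖ ≤ 2 * a * τ := by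
        intro τ hτ x hx
        refine (hVa x (closedBall_subset_closedBall (by linarith [hτ.2]) hx)).trans ?_
        rw [mem_closedBall, dist_eq_norm] at hx
        have : max ‖x - x₀‖ ε ≤ 2 * τ :=
          max_le hx (by linarith [le_max_right ‖ym - x₀‖ ε, hτ.1])
        nlinarith
      have hys : ym ∈ closedBall x₀ s := by
        rw [mem_closedBall, dist_eq_norm]; exact le_max_left _ _
      have e1 := hE s hs0 (hst.trans htt) ym hys _ hB
      have e2 := hE s hs0 (hst.trans htt) x₀ (mem_closedBall_self hs0.le) _ hB
      rw [S.crit, smul_zero, sub_zero] at e2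
      have e3 := (hD s t₁ a hs0 hst htt ha0 hB2).1 (ym - x₀) (le_max_left _ _)
      have e4 := (hfix (ym - x₀) hr).1
      rw [add_sub_cancel] at e3 e4
      have hid : c₀ • gradient U ym = -(Jav ψ U s ym - c₀ • gradient U ym)
        - ((Jav ψ U t₁ ym - Jav ψ U t₁ x₀) - (Jav ψ U s ym - Jav ψ U s x₀))
        + (Jav ψ U t₁ ym - Jav ψ U t₁ x₀) + Jav ψ U s x₀ := by module
      have hn : c₀ * ‖gradient U ym‖ ≤ CE * (s ^ α * (3 * a * s) + s ^ (1 + α)) +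
          CD * (a + 1) * ‖ym - x₀‖ * t₁ ^ α + Ck * ‖ym - x₀‖ +
          CE * (s ^ α * (3 * a * s) + s ^ (1 + α)) := by
        have : c₀ * ‖gradient U ym‖ = ‖c₀ • gradient U ym‖ := by
          rw [norm_smul, Real.norm_of_nonneg hpos.le]
        rw [this, hid]
        refine (norm_add_le _ _).trans (add_le_add ((norm_add_le _ _).trans (add_le_add
          ((norm_sub_le _ _).trans (add_le_add ?_ e3)) e4)) e2)
        rwa [norm_neg]
      have hsα : s ^ α ≤ t₁ ^ α := Real.rpow_le_rpow hs0.le hst α0.le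
      have hys' : ‖ym - x₀‖ ≤ s := le_max_left _ _
      have hn2 : c₀ * ‖gradient U ym‖ ≤ s * ((6 * CE + CD) * t₁ ^ α * a + (2 * CE + CD + Ck)) := by
        refine hn.trans ?_
        rw [Real.rpow_add hs0, Real.rpow_one]
        calc _ ≤ CE * (t₁ ^ α * (3 * a * s) + s * 1) + CD * (a * t₁ ^ α + 1) * s +
              Ck * s + CE * (t₁ ^ α * (3 * a * s) + s * 1) := by
              have hx : CD * (a + 1) * ‖ym - x₀‖ * t₁ ^ α ≤ CD * (a * t₁ ^ α + 1) * s := by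
                calc CD * (a + 1) * ‖ym - x₀‖ * t₁ ^ α
                    = CD * (a * t₁ ^ α + t₁ ^ α) * ‖ym - x₀‖ := by ring
                  _ ≤ _ := by gcongr
              have hs1 := hsα.trans ht1α
              gcongr
          _ = _ := by ring
      have hg : ‖gradient U ym‖ = a * s := by rw [ha]; field_simp
      rw [hg] at hn2
      have h5 : c₀ * a ≤ c₀ / 2 * a + c₀ * C' := by
        have h6 : c₀ * C' = 2 * CE + CD + Ck := by rw [hC']; field_simp
        have h7 : c₀ * a ≤ (6 * CE + CD) * t₁ ^ α * a + (2 * CE + CD + Ck) := by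
          have : s * (c₀ * a) ≤ s * ((6 * CE + CD) * t₁ ^ α * a + (2 * CE + CD + Ck)) := by
            linarith
          exact le_of_mul_le_mul_left this hs0
        have h8 : (6 * CE + CD) * t₁ ^ α * a ≤ c₀ / 2 * a := by gcongr
        linarith
      refine le_max_of_le_left ?_
      have : c₀ * a ≤ c₀ * (2 * C') := by linarith
      exact le_of_mul_le_mul_left this hpos
    · refine le_max_of_le_right ?_
      rw [ha]
      have := le_max_left ‖ym - x₀‖ ε
      gcongr
      · exact S.Vb _
      · linarith
  refine ⟨t₁, max (2 * C') (Vm / t₁), ht₁, htt, by positivity, ?_⟩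
  intro y hy
  rcases (norm_nonneg (y - x₀)).eq_or_lt with h0 | h0
  · have : y = x₀ := sub_eq_zero.1 (norm_eq_zero.1 h0.symm)
    rw [this, S.crit]; simp
  · have := main (min ‖y - x₀‖ t₁) (lt_min h0 ht₁) (min_le_right _ _) y hy
    rwa [max_eq_left (min_le_left _ _)] at this

end Abstract7

/-! ### Part 8: the abstract theorem -/

section Abstract8

set_option linter.unusedSectionVars false

variable {E : Type*} [NormedAddCommGroup E] [InnerProductSpace ℝ E] [FiniteDimensional ℝ E]
  [MeasureSpace E] [BorelSpace E] [(volume : Measure E).IsAddHaarMeasure]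

lemma Mav_add {U : E → ℝ} (hU : ContDiff ℝ 1 U) {ψ : E → ℝ} (hψ : ContDiff ℝ (⊤ : ℕ∞) ψ)
    (hc : HasCompactSupport ψ) (x₀ : E) (t : ℝ) (h k : E) :
    Mav ψ U x₀ t (h + k) = Mav ψ U x₀ t h + Mav ψ U x₀ t k := by
  have hV := continuous_gradient hU
  have i : ∀ h, Integrable fun z => fderiv ℝ ψ z h • gradient U (x₀ + t • z) := fun h =>
    integrable_J (contDiff_fderiv_apply hψ h).continuous (hc.fderiv_apply ℝ h) hV x₀ t
  rw [Mav, Mav, Mav, ← smul_add, ← integral_add (i h) (i k)]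
  simp_rw [map_add, add_smul]

lemma Mav_smul (U : E → ℝ) (ψ : E → ℝ) (x₀ : E) (t c : ℝ) (h : E) :
    Mav ψ U x₀ t (c • h) = c • Mav ψ U x₀ t h := by
  simp_rw [Mav, map_smul, smul_assoc]
  rw [integral_smul, smul_comm]

/-- The limit of a family of linear maps which is Cauchy with rate `t ^ α`. -/
lemma exists_limit {Mt : ℝ → E → E} {t₁ α C : ℝ} (ht : 0 < t₁) (hα : 0 < α)
    (hadd : ∀ t h k, Mt t (h + k) = Mt t h + Mt t k) (hsmul : ∀ t (c : ℝ) h, Mt t (c • h) = c • Mt t h)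
    (hb : ∀ s t h, 0 < s → s ≤ t → t ≤ t₁ → ‖Mt t h - Mt s h‖ ≤ C * ‖h‖ * t ^ α) :
    ∃ L : E →L[ℝ] E, ∀ t h, 0 < t → t ≤ t₁ → ‖Mt t h - L h‖ ≤ C * ‖h‖ * t ^ α := by
  let σ : ℕ → ℝ := fun n => t₁ / ((n : ℝ) + 1)
  have hσ0 : ∀ n, 0 < σ n := fun n => by positivity
  have hσa : ∀ n m, n ≤ m → σ m ≤ σ n := fun n m h => by
    have : (n : ℝ) ≤ m := by exact_mod_cast h
    simp only [σ]
    gcongr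
  have hσ1 : ∀ n, σ n ≤ t₁ := fun n => by
    have := hσa 0 n (Nat.zero_le _)
    simpa [σ] using this
  have hσl : Tendsto σ atTop (𝓝 0) := by
    have := (tendsto_one_div_add_atTop_nhds_zero_nat (𝕜 := ℝ)).const_mul t₁
    simpa [σ, div_eq_mul_inv] using this
  have hlim : ∀ h, ∃ l, Tendsto (fun n => Mt (σ n) h) atTop (𝓝 l) := by
    intro h
    refine cauchySeq_tendsto_of_complete (cauchySeq_of_le_tendsto_0' (fun n => C * ‖h‖ * σ n ^ α)
      ?_ ?_)
    · intro n m hnm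
      rw [dist_eq_norm]
      exact hb _ _ h (hσ0 m) (hσa n m hnm) (hσ1 n)
    · have h1 : Tendsto (fun n => σ n ^ α) atTop (𝓝 0) := by
        have := hσl.rpow_const (p := α) (Or.inr hα.le)
        rwa [Real.zero_rpow hα.ne'] at this
      simpa using h1.const_mul (C * ‖h‖)
  choose L hL using hlim
  let Ll : E →ₗ[ℝ] E :=
    { toFun := L
      map_add' := fun h k => by
        refine tendsto_nhds_unique (hL (h + k)) ?_
        simp_rw [hadd]
        exact (hL h).add (hL k)
      map_smul' := fun c h => by
        refine tendsto_nhds_unique (hL (c • h)) ?_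
        simp_rw [hsmul]
        exact (hL h).const_smul c }
  refine ⟨LinearMap.toContinuousLinearMap Ll, fun t h h0 h1 => ?_⟩
  change ‖Mt t h - L h‖ ≤ _
  refine le_of_tendsto ((tendsto_const_nhds.sub (hL h)).norm) ?_
  filter_upwards [hσl.eventually (ge_mem_nhds h0)] with n hn
  exact hb _ _ h (hσ0 n) hn h1

theorem main_abs {U : E → ℝ} {A : E → E →L[ℝ] E} {x₀ : E} {α lam Lam M t₀ C₁ Vm : ℝ}
    (S : Setup U A x₀ α lam Lam M t₀ C₁ Vm) :
    ∃ (H : E →L[ℝ] E) (C δ : ℝ), 0 ≤ C ∧ 0 < δ ∧ ∀ y, ‖y - x₀‖ ≤ δ →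
      ‖gradient U y - H (y - x₀)‖ ≤ C * ‖y - x₀‖ ^ (1 + α) := by
  obtain ⟨ψ, Φ, CE, hk, hpos, hCE, hE⟩ := Elemma S
  obtain ⟨t₁, a, ht₁, htt, ha, hlin⟩ := lin_growth S hk hpos hCE hE
  obtain ⟨CD, hCD, hD⟩ := diffs S hk
  obtain ⟨Ck, hCk, hfix⟩ := fixed_scale S.hU S.Vb hk.smψ hk.suppψ x₀ ht₁
  have α0 := S.α0
  have α1 := S.α1
  set c₀ := ∫ z, ψ z with hc₀
  have hB2 : ∀ s t, t ≤ t₁ → 0 < s → ∀ τ ∈ Set.Icc s t, ∀ y ∈ closedBall x₀ (2 * τ),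
      ‖gradient U y‖ ≤ 2 * a * τ := by
    intro s t h1 h2 τ hτ y hy
    have hτ0 := h2.trans_le hτ.1
    refine (hlin y (closedBall_subset_closedBall (by linarith [hτ.2]) hy)).trans ?_
    rw [mem_closedBall, dist_eq_norm] at hy
    nlinarith
  obtain ⟨L, hL⟩ := exists_limit (Mt := fun t h => Mav ψ U x₀ t h) (C := CD * (a + 1)) ht₁ α0
    (fun t h k => Mav_add S.hU hk.smψ hk.csψ x₀ t h k) (fun t c h => Mav_smul U ψ x₀ t c h)
    (fun s t h h0 h1 h2 => (hD s t a h0 h1 (h2.trans htt) ha (hB2 s t h2 h0)).2.2 h)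
  refine ⟨-(c₀⁻¹ • L), c₀⁻¹ * (2 * CE * (3 * a + 1) + Ck + 2 * (CD * (a + 1))), t₁,
    by positivity, ht₁, fun y hy => ?_⟩
  rcases (norm_nonneg (y - x₀)).eq_or_lt with h0 | h0
  · have : y = x₀ := sub_eq_zero.1 (norm_eq_zero.1 h0.symm)
    rw [this, S.crit]; simp; positivity
  set r := ‖y - x₀‖ with hr
  have hB : ∀ x ∈ closedBall x₀ (3 * r), ‖gradient U x‖ ≤ 3 * a * r := by
    intro x hx
    refine (hlin x (closedBall_subset_closedBall (by linarith) hx)).trans ?_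
    rw [mem_closedBall, dist_eq_norm] at hx
    nlinarith
  have hyr : y ∈ closedBall x₀ r := by rw [mem_closedBall, dist_eq_norm]
  have e1 := hE r h0 (hy.trans htt) y hyr _ hB
  have e2 := hE r h0 (hy.trans htt) x₀ (mem_closedBall_self h0.le) _ hB
  rw [S.crit, smul_zero, sub_zero] at e2
  change ‖Jav ψ U r y - c₀ • gradient U y‖ ≤ _ at e1
  change ‖Jav ψ U r x₀‖ ≤ _ at e2
  have e3 := (hD r t₁ a h0 hy htt ha (hB2 r t₁ le_rfl h0)).2.1 (y - x₀) le_rfl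
  have e4 := (hfix (y - x₀) hy).2
  have e5 := hL r (y - x₀) h0 hy
  rw [add_sub_cancel] at e3 e4
  rw [← hr] at e3 e4 e5
  have hid : c₀ • gradient U y + L (y - x₀) = -(Jav ψ U r y - c₀ • gradient U y)
      - ((Jav ψ U t₁ y - Jav ψ U t₁ x₀ + Mav ψ U x₀ t₁ (y - x₀)) -
        (Jav ψ U r y - Jav ψ U r x₀ + Mav ψ U x₀ r (y - x₀)))
      + (Jav ψ U t₁ y - Jav ψ U t₁ x₀ + Mav ψ U x₀ t₁ (y - x₀)) + Jav ψ U r x₀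
      - (Mav ψ U x₀ r (y - x₀) - L (y - x₀)) := by module
  have hn : ‖c₀ • gradient U y + L (y - x₀)‖ ≤ CE * (r ^ α * (3 * a * r) + r ^ (1 + α)) +
      CD * (a + 1) * r ^ 2 * r ^ (α - 1) + Ck * r ^ 2 +
      CE * (r ^ α * (3 * a * r) + r ^ (1 + α)) + CD * (a + 1) * r * r ^ α := by
    rw [hid]
    refine (norm_sub_le _ _).trans (add_le_add ((norm_add_le _ _).trans (add_le_add
      ((norm_add_le _ _).trans (add_le_add
      ((norm_sub_le _ _).trans (add_le_add ?_ e3)) e4)) e2)) e5)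
    rwa [norm_neg]
  have hr1 : r ≤ 1 := hy.trans (htt.trans S.t1)
  have hrr : r ^ 2 ≤ r ^ (1 + α) := by
    rw [← Real.rpow_natCast r 2]
    exact Real.rpow_le_rpow_of_exponent_ge h0 hr1 (by push_cast; linarith)
  have hid2 : gradient U y - (-(c₀⁻¹ • L)) (y - x₀) = c₀⁻¹ • (c₀ • gradient U y + L (y - x₀)) := by
    rw [smul_add, smul_smul, inv_mul_cancel₀ hpos.ne', one_smul]
    simp
  rw [hid2, norm_smul, Real.norm_of_nonneg (by positivity), mul_assoc]
  refine mul_le_mul_of_nonneg_left (hn.trans ?_) (by positivity)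
  have f1 : r ^ 2 * r ^ (α - 1) = r ^ (1 + α) := by
    rw [← Real.rpow_natCast r 2, ← Real.rpow_add h0]; congr 1; push_cast; ring
  have f2 : r * r ^ α = r ^ (1 + α) := by rw [Real.rpow_add h0, Real.rpow_one]
  have g1 : CD * (a + 1) * r ^ 2 * r ^ (α - 1) = CD * (a + 1) * r ^ (1 + α) := by
    rw [← f1]; ring
  have g2 : CD * (a + 1) * r * r ^ α = CD * (a + 1) * r ^ (1 + α) := by rw [← f2]; ring
  have g3 : CE * (r ^ α * (3 * a * r) + r ^ (1 + α)) = CE * (3 * a + 1) * r ^ (1 + α) := by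
    rw [← f2]; ring
  have g4 : Ck * r ^ 2 ≤ Ck * r ^ (1 + α) := by gcongr
  rw [g1, g2, g3]
  linarith

end Abstract8

/-! ### Part 9: the key estimate from the weak formulation -/

section Abstract9

set_option linter.unusedSectionVars false

variable {E : Type*} [NormedAddCommGroup E] [InnerProductSpace ℝ E] [FiniteDimensional ℝ E]
  [MeasureSpace E] [BorelSpace E] [(volume : Measure E).IsAddHaarMeasure]

/-- Local form of the equation. -/
structure LocalEq (V : E → E) (A : E → E →L[ℝ] E) (b : E → E) (G : E → ℝ) (x₀ : E)
    (α M Cb t₀ : ℝ) : Prop where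
  hV : Continuous V
  α0 : 0 < α
  α1 : α < 1
  t0 : 0 < t₀
  t1 : t₀ ≤ 1
  M0 : 0 ≤ M
  Cb0 : 0 ≤ Cb
  hA : ∀ x ∈ closedBall x₀ (3 * t₀), ∀ y ∈ closedBall x₀ (3 * t₀), ‖A x - A y‖ ≤ M * ‖x - y‖ ^ α
  hG : ∀ x ∈ closedBall x₀ (3 * t₀), ∀ y ∈ closedBall x₀ (3 * t₀), ‖G x - G y‖ ≤ M * ‖x - y‖ ^ α
  hbi : IntegrableOn b (closedBall x₀ (3 * t₀))
  hbb : ∀ x₁ ∈ closedBall x₀ t₀, ∀ t, 0 < t → t ≤ t₀ →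
    ∫ x in closedBall x₁ (2 * t), ‖b x‖ ≤ Cb * t ^ ((Module.finrank ℝ E : ℝ) - 1 + α)
  weak : ∀ φ : E → ℝ, ContDiff ℝ (⊤ : ℕ∞) φ → HasCompactSupport φ →
    tsupport φ ⊆ closedBall x₀ (3 * t₀) →
    ∫ x, (⟪b x, V x⟫ + G x) * φ x = ∫ x, ⟪A x (V x), gradient φ x⟫

lemma cov {F : Type*} [NormedAddCommGroup F] [NormedSpace ℝ F] (f : E → F) (x₁ : E) {t : ℝ}
    (ht : 0 < t) : ∫ x, f x = (t ^ Module.finrank ℝ E) • ∫ z, f (x₁ + t • z) := by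
  have h1 := Measure.integral_comp_smul (volume : Measure E) (fun z => f (x₁ + z)) t
  rw [h1, integral_add_left_eq_self (fun z => f z) x₁, smul_smul,
    abs_of_pos (by positivity), mul_inv_cancel₀ (by positivity), one_smul]

lemma holder_continuousOn {F : Type*} [NormedAddCommGroup F] {g : E → F} {s : Set E} {M α : ℝ}
    (hα : 0 < α) (h : ∀ x ∈ s, ∀ y ∈ s, ‖g x - g y‖ ≤ M * ‖x - y‖ ^ α) : ContinuousOn g s := by
  intro x hx
  rw [ContinuousWithinAt, tendsto_iff_norm_sub_tendsto_zero]
  have h1 : Tendsto (fun y : E => M * ‖y - x‖ ^ α) (𝓝[s] x) (𝓝 0) := by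
    have : Tendsto (fun y : E => M * ‖y - x‖ ^ α) (𝓝 x) (𝓝 (M * ‖x - x‖ ^ α)) := by
      apply Continuous.tendsto
      exact continuous_const.mul ((continuous_id.sub continuous_const).norm.rpow_const
        (fun _ => Or.inr hα.le))
    rw [sub_self, norm_zero, Real.zero_rpow hα.ne', mul_zero] at this
    exact this.mono_left nhdsWithin_le_nhds
  refine squeeze_zero' (Eventually.of_forall fun _ => norm_nonneg _) ?_ h1
  filter_upwards [self_mem_nhdsWithin] with y hy using h y hy x hx

lemma key_scalar {V : E → E} {A : E → E →L[ℝ] E} {b : E → E} {G : E → ℝ} {x₀ : E}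
    {α M Cb t₀ : ℝ} (S : LocalEq V A b G x₀ α M Cb t₀) :
    ∃ C₁, 0 ≤ C₁ ∧ ∀ x₁ ∈ closedBall x₀ t₀, ∀ t, 0 < t → t ≤ t₀ → ∀ κ : E → ℝ,
    ContDiff ℝ (⊤ : ℕ∞) κ →
    tsupport κ ⊆ closedBall 0 2 → (∫ z, κ z = 0) → ∀ K, 0 ≤ K → (∀ z, ‖κ z‖ ≤ K) →
    (∀ z, ‖fderiv ℝ κ z‖ ≤ K) → ∀ B, (∀ y ∈ closedBall x₁ (2 * t), ‖V y‖ ≤ B) →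
    ‖∫ z, fderiv ℝ κ z (A x₁ (V (x₁ + t • z)))‖ ≤ C₁ * K * (t ^ α * B + t ^ (1 + α)) := by
  set v := (volume : Measure E).real (closedBall (0 : E) 2) with hv
  have hv0 : 0 ≤ v := measureReal_nonneg
  have α0 := S.α0
  have α1 := S.α1
  have M0 := S.M0
  have Cb0 := S.Cb0
  have hV := S.hV
  refine ⟨2 * M * v + Cb, by positivity, ?_⟩
  intro x₁ hx₁ t ht htt κ hκ hsupp hmean K hK hκb hκd B hB
  have hB0 : 0 ≤ B := (norm_nonneg _).trans (hB x₁ (mem_closedBall_self (by linarith)))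
  have hsub : closedBall x₁ (2 * t) ⊆ closedBall x₀ (3 * t₀) := by
    apply closedBall_subset_closedBall'
    rw [mem_closedBall] at hx₁
    linarith
  have hx₁' : x₁ ∈ closedBall x₀ (3 * t₀) := hsub (mem_closedBall_self (by linarith))
  have hmem : ∀ z ∈ closedBall (0 : E) 2, x₁ + t • z ∈ closedBall x₁ (2 * t) := by
    intro z hz
    rw [mem_closedBall_zero_iff] at hz
    rw [mem_closedBall, dist_eq_norm, add_sub_cancel_left, norm_smul, Real.norm_of_nonneg ht.le]
    nlinarith
  have htz : ∀ z ∈ closedBall (0 : E) 2, M * ‖t • z‖ ^ α ≤ 2 * M * t ^ α := by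
    intro z hz
    rw [mem_closedBall_zero_iff] at hz
    have h1 : ‖t • z‖ ≤ 2 * t := by
      rw [norm_smul, Real.norm_of_nonneg ht.le]; nlinarith
    have h2 : (2 : ℝ) ^ α ≤ 2 := by
      calc (2 : ℝ) ^ α ≤ 2 ^ (1 : ℝ) := Real.rpow_le_rpow_of_exponent_le (by norm_num) α1.le
        _ = 2 := Real.rpow_one 2
    calc M * ‖t • z‖ ^ α ≤ M * (2 * t) ^ α := by gcongr
      _ = M * (2 ^ α * t ^ α) := by rw [Real.mul_rpow (by norm_num) ht.le]
      _ ≤ M * (2 * t ^ α) := by gcongr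
      _ = _ := by ring
  have hc : HasCompactSupport κ :=
    (isCompact_closedBall (0 : E) 2).of_isClosed_subset (isClosed_tsupport _) hsupp
  have hout : ∀ z, z ∉ closedBall (0 : E) 2 → κ z = 0 := fun z hz => eq_zero_off hsupp hz
  have hout' : ∀ z, z ∉ closedBall (0 : E) 2 → fderiv ℝ κ z = 0 := fun z hz =>
    fderiv_of_notMem_tsupport ℝ (fun h => hz (hsupp h))
  have hAc := holder_continuousOn α0 S.hA
  have hGc := holder_continuousOn α0 S.hG
  have hκ'c := hκ.continuous_fderiv (by simp)
  -- the test function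
  set φ : E → ℝ := fun x => κ (t⁻¹ • (x - x₁)) with hφ
  have hφz : ∀ z, φ (x₁ + t • z) = κ z := by
    intro z
    simp only [hφ]
    rw [add_sub_cancel_left, smul_smul, inv_mul_cancel₀ ht.ne', one_smul]
  have hφout : ∀ x, x ∉ closedBall x₁ (2 * t) → φ x = 0 := by
    intro x hx
    refine hout _ fun h => hx ?_
    have := hmem _ h
    rwa [smul_smul, mul_inv_cancel₀ ht.ne', one_smul, add_sub_cancel] at this
  have hφs : ContDiff ℝ (⊤ : ℕ∞) φ :=
    hκ.comp (contDiff_const.smul (contDiff_id.sub contDiff_const))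
  have hφsupp : tsupport φ ⊆ closedBall x₁ (2 * t) := by
    refine closure_minimal (fun z hz => ?_) isClosed_closedBall
    by_contra h'
    exact hz (hφout z h')
  have hφc : HasCompactSupport φ :=
    (isCompact_closedBall x₁ (2 * t)).of_isClosed_subset (isClosed_tsupport _) hφsupp
  have hφd : ∀ z w, fderiv ℝ φ (x₁ + t • z) w = t⁻¹ * fderiv ℝ κ z w := by
    intro z w
    have h1 : HasFDerivAt (fun x : E => t⁻¹ • (x - x₁)) (t⁻¹ • ContinuousLinearMap.id ℝ E)
        (x₁ + t • z) := ((hasFDerivAt_id _).sub_const x₁).const_smul t⁻¹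
    have h2 : t⁻¹ • (x₁ + t • z - x₁) = z := by
      rw [add_sub_cancel_left, smul_smul, inv_mul_cancel₀ ht.ne', one_smul]
    have h3 : HasFDerivAt κ (fderiv ℝ κ z) (t⁻¹ • (x₁ + t • z - x₁)) := by
      rw [h2]; exact (hκ.differentiable (by simp) z).hasFDerivAt
    have h4 := h3.comp (x₁ + t • z) h1
    have h5 : fderiv ℝ φ (x₁ + t • z) = _ := h4.fderiv
    rw [h5]
    simp
  set n := Module.finrank ℝ E with hn
  have htn : 0 < t ^ n := by positivity
  have hφK : ∀ x, ‖φ x‖ ≤ K := fun x => hκb _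
  have hweak := S.weak φ hφs hφc (hφsupp.trans hsub)
  set I := ∫ z, fderiv ℝ κ z (A (x₁ + t • z) (V (x₁ + t • z))) with hI
  -- right-hand side
  have hR : ∫ x, ⟪A x (V x), gradient φ x⟫ = t ^ n * (t⁻¹ * I) := by
    have hz : ∀ z, ⟪A (x₁ + t • z) (V (x₁ + t • z)), gradient φ (x₁ + t • z)⟫ =
        t⁻¹ * fderiv ℝ κ z (A (x₁ + t • z) (V (x₁ + t • z))) := by
      intro z
      rw [real_inner_comm, inner_gradient_eq, hφd]
    rw [cov _ x₁ ht, smul_eq_mul, hI]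
    simp_rw [hz]
    rw [integral_const_mul]
  -- left-hand side
  have hφint : ∫ x, φ x = 0 := by
    rw [cov φ x₁ ht]
    simp_rw [hφz]
    rw [hmean, smul_zero]
  have iφ : Integrable φ := hφs.continuous.integrable_of_hasCompactSupport hφc
  have ib : IntegrableOn b (closedBall x₁ (2 * t)) := S.hbi.mono_set hsub
  have ib1 : IntegrableOn (fun x => ⟪b x, V x⟫ * φ x) (closedBall x₁ (2 * t)) := by
    refine Integrable.mono' (ib.norm.mul_const (B * K)) ?_ ?_
    · exact (ib.aestronglyMeasurable.inner hV.aestronglyMeasurable).mul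
        hφs.continuous.aestronglyMeasurable
    · refine (ae_restrict_mem isClosed_closedBall.measurableSet).mono fun x hx => ?_
      rw [norm_mul, ← mul_assoc]
      gcongr
      · exact (norm_inner_le_norm _ _).trans (by gcongr; exact hB x hx)
      · exact hφK x
  have zb : ∀ x, x ∉ closedBall x₁ (2 * t) → ⟪b x, V x⟫ * φ x = 0 := fun x hx => by
    rw [hφout x hx, mul_zero]
  have ib2 : Integrable (fun x => ⟪b x, V x⟫ * φ x) :=
    (integrableOn_iff_integrable_of_support_subset (fun x hx => by
      by_contra h; exact hx (zb x h))).1 ib1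
  have bb : ‖∫ x, ⟪b x, V x⟫ * φ x‖ ≤ B * K * (Cb * t ^ ((n : ℝ) - 1 + α)) := by
    rw [← setIntegral_eq_integral_of_forall_compl_eq_zero zb]
    refine (norm_integral_le_of_norm_le (ib.norm.const_mul (B * K)) ?_).trans ?_
    · refine (ae_restrict_mem isClosed_closedBall.measurableSet).mono fun x hx => ?_
      rw [norm_mul]
      calc _ ≤ (‖b x‖ * B) * K := by
            gcongr
            · exact (norm_inner_le_norm _ _).trans (by gcongr; exact hB x hx)
            · exact hφK x
        _ = _ := by ring
    · rw [integral_const_mul]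
      gcongr
      exact S.hbb x₁ hx₁ t ht htt
  have zG : ∀ x, x ∉ closedBall x₁ (2 * t) → G x * φ x = 0 := fun x hx => by
    rw [hφout x hx, mul_zero]
  have iG : Integrable (fun x => G x * φ x) := by
    refine (integrableOn_iff_integrable_of_support_subset (fun x hx => by
      by_contra h; exact hx (zG x h))).1 (ContinuousOn.integrableOn_compact
        (isCompact_closedBall x₁ (2 * t)) ?_)
    exact (hGc.mono hsub).mul hφs.continuous.continuousOn
  have bG : ‖∫ x, G x * φ x‖ ≤ t ^ n * (2 * M * t ^ α * K * v) := by
    have e : ∫ x, G x * φ x = ∫ x, (G x - G x₁) * φ x := by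
      simp_rw [sub_mul]
      rw [integral_sub iG (iφ.const_mul _), integral_const_mul, hφint, mul_zero, sub_zero]
    rw [e, cov _ x₁ ht, norm_smul, Real.norm_of_nonneg htn.le]
    refine mul_le_mul_of_nonneg_left ?_ htn.le
    refine norm_integral_le_ball ?_ ?_
    · intro z hz
      rw [hφz, hout z hz, mul_zero]
    · intro z hz
      rw [hφz, norm_mul]
      gcongr
      · refine (S.hG _ (hsub (hmem z hz)) x₁ hx₁').trans ?_
        rw [add_sub_cancel_left]
        exact htz z hz
      · exact hκb z
  have hL : ∫ x, (⟪b x, V x⟫ + G x) * φ x = (∫ x, ⟪b x, V x⟫ * φ x) + ∫ x, G x * φ x := by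
    simp_rw [add_mul]
    exact integral_add ib2 iG
  rw [hL, hR] at hweak
  have hIb : ‖I‖ ≤ Cb * K * (t ^ α * B) + 2 * M * v * K * t ^ (1 + α) := by
    have e : I = t * (t ^ n)⁻¹ * ((∫ x, ⟪b x, V x⟫ * φ x) + ∫ x, G x * φ x) := by
      rw [hweak]; field_simp
    have hp1 : t * (t ^ n)⁻¹ * t ^ ((n : ℝ) - 1 + α) = t ^ α := by
      rw [Real.rpow_add ht, Real.rpow_sub_one ht.ne', Real.rpow_natCast]
      field_simp
    have hp2 : t * t ^ α = t ^ (1 + α) := by rw [Real.rpow_add ht, Real.rpow_one]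
    rw [e, norm_mul, Real.norm_of_nonneg (by positivity)]
    calc _ ≤ t * (t ^ n)⁻¹ * (B * K * (Cb * t ^ ((n : ℝ) - 1 + α)) +
          t ^ n * (2 * M * t ^ α * K * v)) := by
          gcongr
          exact (norm_add_le _ _).trans (add_le_add bb bG)
      _ = Cb * K * ((t * (t ^ n)⁻¹ * t ^ ((n : ℝ) - 1 + α)) * B) +
          2 * M * v * K * (t * t ^ α) * (t ^ n * (t ^ n)⁻¹) := by ring
      _ = _ := by rw [hp1, hp2, mul_inv_cancel₀ htn.ne', mul_one]
  -- freezing the coefficients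
  have z1 : ∀ z, z ∉ closedBall (0 : E) 2 →
      fderiv ℝ κ z (A (x₁ + t • z) (V (x₁ + t • z))) = 0 := fun z hz => by
    rw [hout' z hz]; rfl
  have i1 : Integrable fun z => fderiv ℝ κ z (A (x₁ + t • z) (V (x₁ + t • z))) := by
    refine (integrableOn_iff_integrable_of_support_subset (fun x hx => by
      by_contra h; exact hx (z1 x h))).1 (ContinuousOn.integrableOn_compact
        (isCompact_closedBall (0 : E) 2) ?_)
    have h1 : ContinuousOn (fun z => A (x₁ + t • z)) (closedBall (0 : E) 2) :=
      hAc.comp (by fun_prop) (fun z hz => hsub (hmem z hz))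
    exact hκ'c.continuousOn.clm_apply (h1.clm_apply (by fun_prop))
  have i2 : Integrable fun z => fderiv ℝ κ z (A x₁ (V (x₁ + t • z))) :=
    integrable_fderiv_apply hκ hc (by fun_prop)
  have hdiff : ‖(∫ z, fderiv ℝ κ z (A x₁ (V (x₁ + t • z)))) - I‖ ≤
      K * (2 * M * t ^ α * B) * v := by
    rw [hI, ← integral_sub i2 i1]
    refine norm_integral_le_ball ?_ ?_
    · intro z hz
      rw [hout' z hz]; simp
    · intro z hz
      rw [← map_sub, ← _root_.sub_apply]
      refine ((fderiv ℝ κ z).le_opNorm _).trans ?_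
      gcongr
      · exact hκd z
      · refine ((A x₁ - A (x₁ + t • z)).le_opNorm _).trans ?_
        gcongr
        · refine (S.hA x₁ hx₁' _ (hsub (hmem z hz))).trans ?_
          rw [sub_add_cancel_left, norm_neg]
          exact htz z hz
        · exact hB _ (hmem z hz)
  have hfin : ‖∫ z, fderiv ℝ κ z (A x₁ (V (x₁ + t • z)))‖ ≤ K * (2 * M * t ^ α * B) * v +
      (Cb * K * (t ^ α * B) + 2 * M * v * K * t ^ (1 + α)) := by
    have := norm_add_le ((∫ z, fderiv ℝ κ z (A x₁ (V (x₁ + t • z)))) - I) I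
    rw [sub_add_cancel] at this
    exact this.trans (add_le_add hdiff hIb)
  refine hfin.trans ?_
  have : 0 ≤ Cb * K * t ^ (1 + α) := by positivity
  linarith

lemma key_vec {V : E → E} {A : E → E →L[ℝ] E} {b : E → E} {G : E → ℝ} {x₀ : E}
    {α M Cb t₀ : ℝ} (S : LocalEq V A b G x₀ α M Cb t₀) :
    ∃ C₁, 0 ≤ C₁ ∧ ∀ x₁ ∈ closedBall x₀ t₀, ∀ t, 0 < t → t ≤ t₀ → ∀ Θ : E → E,
    ContDiff ℝ (⊤ : ℕ∞) Θ →
    tsupport Θ ⊆ closedBall 0 2 → (∫ z, Θ z = 0) → ∀ K, 0 ≤ K → (∀ z, ‖Θ z‖ ≤ K) →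
    (∀ z, ‖fderiv ℝ Θ z‖ ≤ K) → ∀ B, (∀ y ∈ closedBall x₁ (2 * t), ‖V y‖ ≤ B) →
    ‖∫ z, fderiv ℝ Θ z (A x₁ (V (x₁ + t • z)))‖ ≤ C₁ * K * (t ^ α * B + t ^ (1 + α)) := by
  obtain ⟨C₁, hC₁, hkey⟩ := key_scalar S
  have hV := S.hV
  refine ⟨C₁, hC₁, ?_⟩
  intro x₁ hx₁ t ht htt Θ hΘ hsupp hmean K hK hΘb hΘd B hB
  have hB0 : 0 ≤ B := (norm_nonneg _).trans (hB x₁ (mem_closedBall_self (by linarith)))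
  have hc : HasCompactSupport Θ :=
    (isCompact_closedBall (0 : E) 2).of_isClosed_subset (isClosed_tsupport _) hsupp
  set I := ∫ z, fderiv ℝ Θ z (A x₁ (V (x₁ + t • z))) with hI
  have i2 : Integrable fun z => fderiv ℝ Θ z (A x₁ (V (x₁ + t • z))) :=
    integrable_fderiv_apply hΘ hc (by fun_prop)
  have iΘ : Integrable Θ := hΘ.continuous.integrable_of_hasCompactSupport hc
  have hd : ∀ z, fderiv ℝ (fun z => ⟪I, Θ z⟫) z = (innerSL ℝ I).comp (fderiv ℝ Θ z) := fun z =>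
    ((innerSL ℝ I).hasFDerivAt.comp z (hΘ.differentiable (by simp) z).hasFDerivAt).fderiv
  have h := hkey x₁ hx₁ t ht htt (fun z => ⟪I, Θ z⟫) (contDiff_const.inner ℝ hΘ) ?_ ?_
    (‖I‖ * K) (by positivity) ?_ ?_ B hB
  · have e : ∫ z, fderiv ℝ (fun z => ⟪I, Θ z⟫) z (A x₁ (V (x₁ + t • z))) = ‖I‖ ^ 2 := by
      simp_rw [hd]
      have := integral_inner (𝕜 := ℝ) i2 I
      rw [← hI, real_inner_self_eq_norm_sq] at this
      rw [← this]
      rfl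
    rw [e, Real.norm_of_nonneg (by positivity)] at h
    rcases (norm_nonneg I).eq_or_lt with h0 | h0
    · rw [← h0]; positivity
    · have : ‖I‖ * ‖I‖ ≤ ‖I‖ * (C₁ * K * (t ^ α * B + t ^ (1 + α))) := by
        calc ‖I‖ * ‖I‖ = ‖I‖ ^ 2 := by ring
          _ ≤ _ := h
          _ = _ := by ring
      exact le_of_mul_le_mul_left this h0
  · refine closure_minimal (fun z hz => ?_) isClosed_closedBall
    by_contra h'
    exact hz (by simp [eq_zero_off hsupp h'])
  · rw [integral_inner (𝕜 := ℝ) iΘ I, hmean, inner_zero_right]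
  · intro z
    exact (norm_inner_le_norm _ _).trans (by gcongr; exact hΘb z)
  · intro z
    rw [hd]
    refine (ContinuousLinearMap.opNorm_comp_le _ _).trans ?_
    rw [innerSL_apply_norm]
    gcongr
    exact hΘd z

end Abstract9


/-! ### Part 10: localization -/

section Abstract10

set_option linter.unusedSectionVars false

variable {E : Type*} [NormedAddCommGroup E] [InnerProductSpace ℝ E] [FiniteDimensional ℝ E]
  [MeasureSpace E] [BorelSpace E] [(volume : Measure E).IsAddHaarMeasure]

lemma good_symPart {A : E →L[ℝ] E} {lam Lam : ℝ} (hLam : 0 < Lam)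
    (hell : ∀ ξ : E, lam * ‖ξ‖ ^ 2 ≤ ⟪A ξ, ξ⟫)
    (hbd : ∀ ξ η : E, |⟪A ξ, η⟫| ≤ Lam * ‖ξ‖ * ‖η‖) : Good lam Lam (symPart A) := by
  have e : ∀ a b : E, ⟪symPart A a, b⟫ = (1 / 2) * (⟪A a, b⟫ + ⟪A b, a⟫) := by
    intro a b
    simp only [symPart, _root_.smul_apply, _root_.add_apply, inner_smul_left, inner_add_left,
      ContinuousLinearMap.adjoint_inner_left]
    rw [real_inner_comm (A b) a]
    simp
  constructor
  · intro a b
    rw [e, real_inner_comm (symPart A b) a, e]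
    ring
  · intro v
    rw [e]
    linarith [hell v]
  · intro v
    rcases (norm_nonneg (symPart A v)).eq_or_lt with h0 | h0
    · rw [← h0]; positivity
    · have h1 : ‖symPart A v‖ * ‖symPart A v‖ ≤ ‖symPart A v‖ * (Lam * ‖v‖) := by
        rw [← real_inner_self_eq_norm_mul_norm, e]
        have h2 := (le_abs_self _).trans (hbd v (symPart A v))
        have h3 := (le_abs_self _).trans (hbd (symPart A v) v)
        linarith
      exact le_of_mul_le_mul_left h1 h0

lemma symPart_sub_le (A B : E →L[ℝ] E) : ‖symPart A - symPart B‖ ≤ ‖A - B‖ := by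
  have h : symPart A - symPart B = (1 / 2 : ℝ) • ((A - B) + ContinuousLinearMap.adjoint (A - B)) := by
    simp only [symPart, map_sub]
    module
  rw [h, norm_smul]
  have h1 := norm_add_le (A - B) (ContinuousLinearMap.adjoint (A - B))
  rw [LinearIsometryEquiv.norm_map] at h1
  rw [Real.norm_of_nonneg (by norm_num)]
  linarith

/-- Hoelder bound for the drift. -/
lemma drift_bound {b : E → E} {Ω : Set E} {p α : ℝ} (α0 : 0 < α) (α1 : α < 1)
    (hd : 2 ≤ Module.finrank ℝ E)
    (hp : (Module.finrank ℝ E : ℝ) / (1 - α) ≤ p)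
    (hb : MemLp b (ENNReal.ofReal p) (volume.restrict Ω)) :
    ∃ Cb, 0 ≤ Cb ∧ ∀ x₁ : E, ∀ t, 0 < t → t ≤ 1 → closedBall x₁ (2 * t) ⊆ Ω →
      IntegrableOn b (closedBall x₁ (2 * t)) ∧
      ∫ x in closedBall x₁ (2 * t), ‖b x‖ ≤ Cb * t ^ ((Module.finrank ℝ E : ℝ) - 1 + α) := by
  set n := Module.finrank ℝ E with hn
  have hn2 : (2 : ℝ) ≤ n := by exact_mod_cast hd
  have hn1 : (n : ℝ) ≤ p * (1 - α) := by rwa [div_le_iff₀ (by linarith)] at hp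
  have hp0 : 0 < p := lt_of_lt_of_le (by positivity [sub_pos.2 α1]) hp
  have hp1 : 1 < p := by nlinarith
  set N := (eLpNorm b (ENNReal.ofReal p) (volume.restrict Ω)).toReal with hN
  set v := (volume : Measure E).real (closedBall (0 : E) 2) with hv
  refine ⟨N * v ^ (1 - 1 / p), by positivity, ?_⟩
  intro x₁ t ht ht1 hsub
  set B := closedBall x₁ (2 * t) with hB
  have hbB : MemLp b (ENNReal.ofReal p) (volume.restrict B) := hb.mono_measure (Measure.restrict_mono_set _ hsub)
  have : IsFiniteMeasure ((volume : Measure E).restrict B) :=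
    ⟨by rw [Measure.restrict_apply_univ]; exact measure_closedBall_lt_top⟩
  have h1p : (1 : ℝ≥0∞) ≤ ENNReal.ofReal p := by
    rw [← ENNReal.ofReal_one]; exact ENNReal.ofReal_le_ofReal hp1.le
  have hIntg : Integrable b (volume.restrict B) := hbB.integrable h1p
  refine ⟨hIntg, ?_⟩
  have h2 := eLpNorm_le_eLpNorm_mul_rpow_measure_univ h1p hbB.aestronglyMeasurable
  rw [ENNReal.toReal_one, ENNReal.toReal_ofReal hp0.le, Measure.restrict_apply_univ] at h2
  have hvol : (volume : Measure E).real B = t ^ n * v := by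
    have := Measure.addHaar_closedBall_mul (volume : Measure E) x₁ ht.le (r := t) (s := 2) (by norm_num)
    rw [hB, mul_comm 2 t, measureReal_def, this, ENNReal.toReal_mul, ENNReal.toReal_ofReal (by positivity), hv, measureReal_def]
  have h3 : ∫ x in B, ‖b x‖ = (eLpNorm b 1 (volume.restrict B)).toReal := by
    rw [eLpNorm_one_eq_lintegral_enorm, integral_norm_eq_lintegral_enorm hIntg.aestronglyMeasurable]
  have h4 : eLpNorm b (ENNReal.ofReal p) (volume.restrict B) ≤ eLpNorm b (ENNReal.ofReal p) (volume.restrict Ω) :=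
    eLpNorm_mono_measure _ (Measure.restrict_mono_set _ hsub)
  have hexp : 0 ≤ 1 - 1 / p := by
    rw [sub_nonneg, div_le_one hp0]; exact hp1.le
  have hexp' : 1 - 1 / p = 1 / 1 - 1 / p := by norm_num
  rw [h3]
  calc (eLpNorm b 1 (volume.restrict B)).toReal
      ≤ (eLpNorm b (ENNReal.ofReal p) (volume.restrict Ω) * volume B ^ (1 - 1 / p)).toReal := by
        apply ENNReal.toReal_mono
        · exact ENNReal.mul_ne_top hb.eLpNorm_ne_top
            (ENNReal.rpow_ne_top_of_nonneg hexp measure_closedBall_lt_top.ne)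
        · rw [hexp']
          exact h2.trans (mul_le_mul_left h4 _)
    _ = N * (t ^ n * v) ^ (1 - 1 / p) := by
        rw [ENNReal.toReal_mul, ← ENNReal.toReal_rpow, ← measureReal_def, hvol]
    _ = N * v ^ (1 - 1 / p) * t ^ ((n : ℝ) * (1 - 1 / p)) := by
        rw [Real.mul_rpow (by positivity) measureReal_nonneg, ← Real.rpow_natCast, ← Real.rpow_mul ht.le]
        ring
    _ ≤ N * v ^ (1 - 1 / p) * t ^ ((n : ℝ) - 1 + α) := by
        refine mul_le_mul_of_nonneg_left ?_ (by positivity)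
        apply Real.rpow_le_rpow_of_exponent_ge ht ht1
        have : (n : ℝ) / p ≤ 1 - α := by rw [div_le_iff₀ hp0]; linarith
        have e : (n : ℝ) * (1 - 1 / p) = n - n / p := by ring
        rw [e]; linarith

end Abstract10


/-! ### Part 11: the cut-off and conclusion -/

section Abstract11

set_option linter.unusedSectionVars false

variable {E : Type*} [NormedAddCommGroup E] [InnerProductSpace ℝ E] [FiniteDimensional ℝ E]
  [MeasureSpace E] [BorelSpace E] [(volume : Measure E).IsAddHaarMeasure]

/-- Localization of a `C¹` function. -/
lemma exists_local_cutoff {Ω : Set E} (hΩ : IsOpen Ω) {u : E → ℝ} (hu : ContDiffOn ℝ 1 u Ω) {x₀ : E}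
    (hx₀ : x₀ ∈ Ω) : ∃ (U : E → ℝ) (r : ℝ), ContDiff ℝ 1 U ∧ HasCompactSupport U ∧ 0 < r ∧
      ball x₀ r ⊆ Ω ∧ ∀ x ∈ ball x₀ r, U x = u x := by
  obtain ⟨R, hR, hsub⟩ := nhds_basis_closedBall.mem_iff.1 (hΩ.mem_nhds hx₀)
  let η : ContDiffBump x₀ := ⟨R / 2, R, by positivity, by linarith⟩
  have hη : tsupport η = closedBall x₀ R := η.tsupport_eq
  refine ⟨fun x => η x * u x, R / 2, ?_, ?_, by positivity, ?_, ?_⟩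
  · rw [contDiff_iff_contDiffAt]
    intro x
    by_cases hx : x ∈ tsupport η
    · rw [hη] at hx
      exact η.contDiffAt.mul (hu.contDiffAt (hΩ.mem_nhds (hsub hx)))
    · have : (fun x => η x * u x) =ᶠ[𝓝 x] fun _ => 0 := by
        filter_upwards [(isClosed_tsupport η).isOpen_compl.mem_nhds hx] with y hy
        rw [image_eq_zero_of_notMem_tsupport hy, zero_mul]
      exact contDiffAt_const.congr_of_eventuallyEq this
  · exact η.hasCompactSupport.mul_right
  · exact (ball_subset_closedBall.trans (closedBall_subset_closedBall (by linarith))).trans hsub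
  · intro x hx
    show η x * u x = u x
    rw [η.one_of_mem_closedBall (ball_subset_closedBall hx), one_mul]

lemma holder_mul {s : Set E} {c u : E → ℝ} {α M₁ M₂ B₁ B₂ : ℝ}
    (hc : ∀ x ∈ s, ∀ y ∈ s, ‖c x - c y‖ ≤ M₁ * ‖x - y‖ ^ α)
    (hu : ∀ x ∈ s, ∀ y ∈ s, ‖u x - u y‖ ≤ M₂ * ‖x - y‖ ^ α)
    (hcb : ∀ x ∈ s, ‖c x‖ ≤ B₁) (hub : ∀ x ∈ s, ‖u x‖ ≤ B₂) :
    ∀ x ∈ s, ∀ y ∈ s, ‖c x * u x - c y * u y‖ ≤ (B₁ * M₂ + M₁ * B₂) * ‖x - y‖ ^ α := by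
  intro x hx y hy
  have e : c x * u x - c y * u y = c x * (u x - u y) + (c x - c y) * u y := by ring
  rw [e]
  refine (norm_add_le _ _).trans ?_
  rw [norm_mul, norm_mul]
  have h1 := hc x hx y hy
  have h2 := hu x hx y hy
  have h3 := mul_le_mul (hcb x hx) h2 (norm_nonneg _) ((norm_nonneg _).trans (hcb x hx))
  have h4 := mul_le_mul h1 (hub y hy) (norm_nonneg _) ((norm_nonneg _).trans h1)
  linarith

lemma lip_holder {U : E → ℝ} (hU : ContDiff ℝ 1 U) (hc : HasCompactSupport U) {α : ℝ}
    (α1 : α < 1) (x₀ : E) {ρ : ℝ} (hρ : 0 < ρ) :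
    ∃ L, ∀ x ∈ closedBall x₀ ρ, ∀ y ∈ closedBall x₀ ρ, ‖U x - U y‖ ≤ L * ‖x - y‖ ^ α := by
  obtain ⟨C, hC0, hC⟩ := bounded_of_cs (hU.continuous_fderiv (by simp)) (hc.fderiv ℝ)
  refine ⟨C * (2 * ρ) ^ (1 - α), ?_⟩
  intro x hx y hy
  have h1 := Convex.norm_image_sub_le_of_norm_fderiv_le (𝕜 := ℝ) (f := U) (C := C) (s := Set.univ)
    (fun x _ => hU.differentiable (by simp) x) (fun x _ => hC x) convex_univ
    (Set.mem_univ y) (Set.mem_univ x)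
  refine h1.trans ?_
  rw [mul_assoc]
  refine mul_le_mul_of_nonneg_left ?_ hC0
  rcases (norm_nonneg (x - y)).eq_or_lt with h0 | h0
  · rw [← h0]; positivity
  · have h2 : ‖x - y‖ ≤ 2 * ρ := by
      rw [mem_closedBall_iff_norm] at hx hy
      calc ‖x - y‖ = ‖(x - x₀) - (y - x₀)‖ := by congr 1; abel
        _ ≤ _ := norm_sub_le _ _
        _ ≤ _ := by linarith
    calc ‖x - y‖ = ‖x - y‖ ^ (1 - α) * ‖x - y‖ ^ α := by
          rw [← Real.rpow_add h0]; simp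
      _ ≤ _ := by
          gcongr

lemma gradient_congr_ball {U u : E → ℝ} {x₀ : E} {r : ℝ} (h : ∀ x ∈ ball x₀ r, U x = u x) :
    ∀ x ∈ ball x₀ r, gradient U x = gradient u x := by
  intro x hx
  have : U =ᶠ[𝓝 x] u := by
    filter_upwards [isOpen_ball.mem_nhds hx] with y hy using h y hy
  unfold gradient
  rw [this.fderiv_eq]

lemma holder_max {F : Type*} [NormedAddCommGroup F] {g : E → F} {s : Set E} {M M' α : ℝ}
    (hM : M ≤ M') (h : ∀ x ∈ s, ∀ y ∈ s, ‖g x - g y‖ ≤ M * ‖x - y‖ ^ α) :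
    ∀ x ∈ s, ∀ y ∈ s, ‖g x - g y‖ ≤ M' * ‖x - y‖ ^ α := fun x hx y hy =>
  (h x hx y hy).trans (mul_le_mul_of_nonneg_right hM (by positivity))

theorem final_abs (hd : 2 ≤ Module.finrank ℝ E) {Ω : Set E} (hΩ : IsOpen Ω)
    {lam Lam α : ℝ} (hlam : 0 < lam) (hLam : 0 < Lam) (α0 : 0 < α) (α1 : α < 1)
    {A : E → E →L[ℝ] E} {b : E → E} {c f : E → ℝ}
    (hell : ∀ x ∈ Ω, ∀ ξ : E, lam * ‖ξ‖ ^ 2 ≤ ⟪A x ξ, ξ⟫)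
    (hAbd : ∀ x ∈ Ω, ∀ ξ η : E, |⟪A x ξ, η⟫| ≤ Lam * ‖ξ‖ * ‖η‖)
    {MA Mc Mf : ℝ}
    (hAH : ∀ x ∈ Ω, ∀ y ∈ Ω, ‖A x - A y‖ ≤ MA * ‖x - y‖ ^ α)
    (hcH : ∀ x ∈ Ω, ∀ y ∈ Ω, ‖c x - c y‖ ≤ Mc * ‖x - y‖ ^ α)
    (hfH : ∀ x ∈ Ω, ∀ y ∈ Ω, ‖f x - f y‖ ≤ Mf * ‖x - y‖ ^ α)
    {p : ℝ} (hp : (Module.finrank ℝ E : ℝ) / (1 - α) ≤ p)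
    (hb : MemLp b (ENNReal.ofReal p) (volume.restrict Ω))
    {u : E → ℝ} (hu : ContDiffOn ℝ 1 u Ω)
    (hsol : ∀ φ : E → ℝ, ContDiff ℝ (⊤ : ℕ∞) φ → HasCompactSupport φ → tsupport φ ⊆ Ω →
      ∫ x in Ω, (⟪b x, gradient u x⟫ + c x * u x - f x) * φ x
      = ∫ x in Ω, ⟪A x (gradient u x), gradient φ x⟫)
    {x₀ : E} (hx₀ : x₀ ∈ Ω) (hcrit : gradient u x₀ = 0) :
    DifferentiableAt ℝ (gradient u) x₀ ∧
    ∃ C : ℝ, 0 < C ∧ ∃ δ : ℝ, 0 < δ ∧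
      ∀ x : E, ‖x - x₀‖ < δ →
        ‖gradient u x - fderiv ℝ (gradient u) x₀ (x - x₀)‖ ≤ C * ‖x - x₀‖ ^ (1 + α) := by
  obtain ⟨U, r, hU, hUc, hr, hrΩ, hUu⟩ := exists_local_cutoff hΩ hu hx₀
  have hgr := gradient_congr_ball hUu
  set t₀ := min (r / 4) 1 with ht₀
  have t0 : 0 < t₀ := lt_min (by positivity) one_pos
  have t1 : t₀ ≤ 1 := min_le_right _ _
  have t4 : t₀ ≤ r / 4 := min_le_left _ _
  set Bl := closedBall x₀ (3 * t₀) with hBl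
  have hBr : Bl ⊆ ball x₀ r := closedBall_subset_ball (by linarith)
  have hBΩ : Bl ⊆ Ω := hBr.trans hrΩ
  -- the zeroth-order data
  obtain ⟨L, hL⟩ := lip_holder hU hUc α1 x₀ (show 0 < 3 * t₀ by positivity)
  have hcB : ∀ x ∈ Bl, ∀ y ∈ Bl, ‖c x - c y‖ ≤ Mc * ‖x - y‖ ^ α :=
    fun x hx y hy => hcH x (hBΩ hx) y (hBΩ hy)
  obtain ⟨B₁, hB₁⟩ := (isCompact_closedBall x₀ (3 * t₀)).exists_bound_of_continuousOn
    (holder_continuousOn α0 hcB)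
  obtain ⟨B₂, -, hB₂⟩ := bounded_of_cs hU.continuous hUc
  have hcu := holder_mul hcB hL hB₁ (fun x _ => hB₂ x)
  set G : E → ℝ := fun x => c x * U x - f x with hG
  have hGH : ∀ x ∈ Bl, ∀ y ∈ Bl, ‖G x - G y‖ ≤ (B₁ * L + Mc * B₂ + Mf) * ‖x - y‖ ^ α := by
    intro x hx y hy
    have e : G x - G y = (c x * U x - c y * U y) - (f x - f y) := by simp only [hG]; ring
    rw [e]
    refine (norm_sub_le _ _).trans ?_
    rw [add_mul (B₁ * L + Mc * B₂)]
    exact add_le_add (hcu x hx y hy) (hfH x (hBΩ hx) y (hBΩ hy))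
  set M := max (max MA (B₁ * L + Mc * B₂ + Mf)) 0 with hM
  have hAM : MA ≤ M := (le_max_left _ _).trans (le_max_left _ _)
  have hGM : B₁ * L + Mc * B₂ + Mf ≤ M := (le_max_right _ _).trans (le_max_left _ _)
  have hAB : ∀ x ∈ Bl, ∀ y ∈ Bl, ‖A x - A y‖ ≤ M * ‖x - y‖ ^ α :=
    holder_max hAM fun x hx y hy => hAH x (hBΩ hx) y (hBΩ hy)
  obtain ⟨Cb, hCb, hdrift⟩ := drift_bound α0 α1 hd hp hb
  have hgc : Continuous (gradient U) := continuous_gradient hU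
  have hbL : IntegrableOn b Bl := by
    have : IsFiniteMeasure ((volume : Measure E).restrict Bl) :=
      ⟨by rw [Measure.restrict_apply_univ]; exact measure_closedBall_lt_top⟩
    have h1p : (1 : ℝ) ≤ p := by
      refine le_trans ?_ hp
      rw [le_div_iff₀ (by linarith)]
      have : (2 : ℝ) ≤ Module.finrank ℝ E := by exact_mod_cast hd
      linarith
    refine MemLp.integrable (q := ENNReal.ofReal p) ?_
      (hb.mono_measure (Measure.restrict_mono_set _ hBΩ))
    rw [← ENNReal.ofReal_one]
    exact ENNReal.ofReal_le_ofReal h1p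
  have hLE : LocalEq (gradient U) A b G x₀ α M Cb t₀ := by
    refine ⟨hgc, α0, α1, t0, t1, le_max_right _ _, hCb, hAB, holder_max hGM hGH, hbL, ?_, ?_⟩
    · intro x₁ hx₁ t ht htt
      refine (hdrift x₁ t ht (htt.trans t1) (Set.Subset.trans ?_ hBΩ)).2
      refine closedBall_subset_closedBall' ?_
      rw [mem_closedBall] at hx₁
      linarith
    · intro φ hφ hφc hφs
      have h := hsol φ hφ hφc (hφs.trans hBΩ)
      have z1 : ∀ x, x ∉ Bl → φ x = 0 := fun x hx =>
        image_eq_zero_of_notMem_tsupport fun h' => hx (hφs h')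
      have z2 : ∀ x, x ∉ Bl → gradient φ x = 0 := fun x hx => by
        unfold gradient
        rw [fderiv_of_notMem_tsupport ℝ (fun h' => hx (hφs h')), map_zero]
      rw [setIntegral_eq_integral_of_forall_compl_eq_zero
          (fun x hx => by rw [z1 x (fun h' => hx (hBΩ h')), mul_zero]),
        setIntegral_eq_integral_of_forall_compl_eq_zero
          (fun x hx => by rw [z2 x (fun h' => hx (hBΩ h')), inner_zero_right])] at h
      have e1 : ∀ x, (⟪b x, gradient U x⟫ + G x) * φ x =
          (⟪b x, gradient u x⟫ + c x * u x - f x) * φ x := by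
        intro x
        by_cases hx : x ∈ Bl
        · rw [hgr x (hBr hx), hG]
          simp only
          rw [hUu x (hBr hx)]
          ring
        · rw [z1 x hx, mul_zero, mul_zero]
      have e2 : ∀ x, ⟪A x (gradient U x), gradient φ x⟫ =
          ⟪A x (gradient u x), gradient φ x⟫ := by
        intro x
        by_cases hx : x ∈ Bl
        · rw [hgr x (hBr hx)]
        · rw [z2 x hx, inner_zero_right, inner_zero_right]
      rw [integral_congr_ae (Eventually.of_forall e1), integral_congr_ae (Eventually.of_forall e2)]
      exact h
  obtain ⟨C₁, hC₁, hkey⟩ := key_vec hLE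
  obtain ⟨Vm, -, hVm⟩ := bounded_of_cs hgc (hasCompactSupport_gradient hUc)
  have hsB : closedBall x₀ t₀ ⊆ Bl := closedBall_subset_closedBall (by linarith)
  have hx₀B : x₀ ∈ Bl := mem_closedBall_self (by linarith)
  have hx₀r : x₀ ∈ ball x₀ r := mem_ball_self hr
  have S : Setup U A x₀ α lam Lam M t₀ C₁ Vm := by
    refine ⟨hU, α0, α1, hlam, hLam, t0, t1, hC₁, le_max_right _ _, hVm, ?_, ?_, ?_, hkey⟩
    · rw [hgr x₀ hx₀r, hcrit]
    · exact fun y hy => good_symPart hLam (hell y (hBΩ (hsB hy))) (hAbd y (hBΩ (hsB hy)))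
    · exact fun y hy => (symPart_sub_le _ _).trans (hAB y (hsB hy) x₀ hx₀B)
  obtain ⟨H, C, δ, hC, hδ, hmain⟩ := main_abs S
  have hcrU : gradient u x₀ = 0 := hcrit
  have hu' : ∀ x, ‖x - x₀‖ < min δ r →
      ‖gradient u x - H (x - x₀)‖ ≤ C * ‖x - x₀‖ ^ (1 + α) := by
    intro x hx
    rw [← hgr x (mem_ball_iff_norm.2 (hx.trans_le (min_le_right _ _)))]
    exact hmain x (hx.le.trans (min_le_left _ _))
  have hδ' : 0 < min δ r := lt_min hδ hr
  have hder : HasFDerivAt (gradient u) H x₀ := by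
    rw [hasFDerivAt_iff_isLittleO]
    have hO : (fun x => gradient u x - gradient u x₀ - H (x - x₀)) =O[𝓝 x₀]
        fun x => ‖x - x₀‖ ^ (1 + α) := by
      refine Asymptotics.IsBigO.of_bound C ?_
      filter_upwards [ball_mem_nhds x₀ hδ'] with x hx
      rw [mem_ball_iff_norm] at hx
      rw [hcrU, sub_zero, Real.norm_of_nonneg (by positivity)]
      exact hu' x hx
    refine hO.trans_isLittleO ?_
    rw [Asymptotics.isLittleO_iff]
    intro ε hε
    have ht : Tendsto (fun x : E => ‖x - x₀‖ ^ α) (𝓝 x₀) (𝓝 0) := by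
      have : Tendsto (fun x : E => ‖x - x₀‖ ^ α) (𝓝 x₀) (𝓝 (‖x₀ - x₀‖ ^ α)) := by
        apply Continuous.tendsto
        exact (continuous_id.sub continuous_const).norm.rpow_const (fun _ => Or.inr α0.le)
      rwa [sub_self, norm_zero, Real.zero_rpow α0.ne'] at this
    filter_upwards [ht.eventually_lt_const hε] with x hx
    rw [Real.norm_of_nonneg (by positivity), Real.rpow_add_of_nonneg (norm_nonneg _) zero_le_one α0.le,
      Real.rpow_one, mul_comm]
    exact mul_le_mul_of_nonneg_right hx.le (norm_nonneg _)
  refine ⟨hder.differentiableAt, C + 1, by positivity, min δ r, hδ', ?_⟩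
  intro x hx
  rw [hder.fderiv]
  refine (hu' x hx).trans (mul_le_mul_of_nonneg_right (by linarith) (by positivity))

end Abstract11

/-- `C^{2,α}` regularity at critical points for divergence-form equations
with `C^α` coefficients. -/
theorem stmt1 {d : ℕ} (hd : 2 ≤ d) (Ω : Set (Euc d)) (hΩo : IsOpen Ω) (hΩc : IsConnected Ω)
    (lam Lam : ℝ) (hlam : 0 < lam) (hLam : 0 < Lam)
    (α : ℝ) (hα : α ∈ Set.Ioo (0 : ℝ) 1)
    (A : Euc d → Euc d →L[ℝ] Euc d) (b : Euc d → Euc d) (c f : Euc d → ℝ)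
    (hell : ∀ x ∈ Ω, ∀ ξ : Euc d, lam * ‖ξ‖ ^ 2 ≤ ⟪A x ξ, ξ⟫)
    (hAbd : ∀ x ∈ Ω, ∀ ξ η : Euc d, |⟪A x ξ, η⟫| ≤ Lam * ‖ξ‖ * ‖η‖)
    (hAH : HolderOnE A α Ω)
    (p : ℝ) (hp : (d : ℝ) / (1 - α) ≤ p)
    (hb : MemLp b (ENNReal.ofReal p) (volume.restrict Ω))
    (hcH : HolderOnE c α Ω) (hfH : HolderOnE f α Ω)
    (u : Euc d → ℝ) (hu : ContDiffOn ℝ 1 u Ω)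
    (hsol : IsWeakSolDiv Ω A b c f u)
    (x₀ : Euc d) (hx₀ : x₀ ∈ Ω) (hcrit : gradient u x₀ = 0) :
    DifferentiableAt ℝ (gradient u) x₀ ∧
    ∃ C : ℝ, 0 < C ∧ ∃ δ : ℝ, 0 < δ ∧
      ∀ x : Euc d, ‖x - x₀‖ < δ →
        ‖gradient u x - fderiv ℝ (gradient u) x₀ (x - x₀)‖ ≤ C * ‖x - x₀‖ ^ (1 + α) := by
  obtain ⟨MA, hMA⟩ := hAH
  obtain ⟨Mc, hMc⟩ := hcH
  obtain ⟨Mf, hMf⟩ := hfH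
  have hfr : Module.finrank ℝ (Euc d) = d := by simp
  exact final_abs (E := Euc d) (by rw [hfr]; exact hd) hΩo hlam hLam hα.1 hα.2 hell hAbd hMA hMc
    hMf (by rw [hfr]; exact hp) hb hu hsol hx₀ hcrit
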